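/- arXiv:0704.0347 — 2 statements merged into one kernel-verified Lean document; each statement's English description precedes it below -/
import Mathlib

section
/- Let n ≥ 2 and θ > 0. There exists a constant C > 0 such that for every τ > 0 and every Schwartz function f on ℝⁿ, ‖f̂‖_{L²(Σ(τ))} ≤ C ‖⟨x⟩^{1/2+θ} f‖_{L²(ℝⁿ)}, where the constant C is independent of τ. -/
open MeasureTheory Real Complex RealInnerProductSpace

noncomputable section

/-- Fourier transform with convention `(2π)^(-n/2) ∫ e^(-ix·ξ) f(x) dx`. -/
def FT (n : ℕ) (f : EuclideanSpace ℝ (Fin n) → ℂ) (ξ : EuclideanSpace ℝ (Fin n)) : ℂ :=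
  ((2 * π) ^ (-(n : ℝ) / 2) : ℝ) •
    ∫ x : EuclideanSpace ℝ (Fin n), Complex.exp (-Complex.I * ((⟪x, ξ⟫ : ℝ) : ℂ)) * f x

/-- Inverse Fourier transform. -/
def IFT (n : ℕ) (F : EuclideanSpace ℝ (Fin n) → ℂ) (x : EuclideanSpace ℝ (Fin n)) : ℂ :=
  ((2 * π) ^ (-(n : ℝ) / 2) : ℝ) •
    ∫ ξ : EuclideanSpace ℝ (Fin n), Complex.exp (Complex.I * ((⟪x, ξ⟫ : ℝ) : ℂ)) * F ξ

/-- Fourier multiplier with symbol `q`: `q(D_x) f = IFT (q · FT f)`. -/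
def mult (n : ℕ) (q : EuclideanSpace ℝ (Fin n) → ℂ) (f : EuclideanSpace ℝ (Fin n) → ℂ) :
    EuclideanSpace ℝ (Fin n) → ℂ :=
  IFT n fun ξ => q ξ * FT n f ξ

open scoped ENNReal NNReal SchwartzMap Topology FourierTransform

section Coordinates

variable {m : ℕ}

/-- The linear map forgetting the `i`-th coordinate. -/
def dropCoord (i : Fin (m + 1)) :
    EuclideanSpace ℝ (Fin (m + 1)) →ₗ[ℝ] EuclideanSpace ℝ (Fin m) where
  toFun x := WithLp.toLp 2 fun j => x (i.succAbove j)
  map_add' _ _ := rfl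
  map_smul' _ _ := rfl

/-- Insert a scalar as the `i`-th coordinate. -/
def insertCoord (i : Fin (m + 1)) (p : ℝ × EuclideanSpace ℝ (Fin m)) :
    EuclideanSpace ℝ (Fin (m + 1)) :=
  WithLp.toLp 2 (i.insertNth (α := fun _ => ℝ) p.1 (fun j => p.2 j))

lemma dropCoord_apply (i : Fin (m + 1)) (x : EuclideanSpace ℝ (Fin (m + 1))) (j : Fin m) :
    dropCoord i x j = x (i.succAbove j) := rfl

lemma continuous_dropCoord (i : Fin (m + 1)) : Continuous (dropCoord i) :=
  (dropCoord i).continuous_of_finiteDimensional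

@[simp] lemma insertCoord_same (i : Fin (m + 1)) (p : ℝ × EuclideanSpace ℝ (Fin m)) :
    insertCoord i p i = p.1 := by
  simp [insertCoord]

@[simp] lemma insertCoord_succAbove (i : Fin (m + 1)) (p : ℝ × EuclideanSpace ℝ (Fin m))
    (j : Fin m) : insertCoord i p (i.succAbove j) = p.2 j := by
  simp [insertCoord]

lemma inner_insertCoord (i : Fin (m + 1)) (t : ℝ) (y : EuclideanSpace ℝ (Fin m))
    (ξ : EuclideanSpace ℝ (Fin (m + 1))) :
    ⟪insertCoord i (t, y), ξ⟫ = t * ξ i + ⟪y, dropCoord i ξ⟫ := by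
  simp [PiLp.inner_apply, Fin.sum_univ_succAbove _ i, dropCoord_apply, mul_comm]

lemma norm_sq_insertCoord (i : Fin (m + 1)) (t : ℝ) (y : EuclideanSpace ℝ (Fin m)) :
    ‖insertCoord i (t, y)‖ ^ 2 = t ^ 2 + ‖y‖ ^ 2 := by
  simp [EuclideanSpace.norm_sq_eq, Fin.sum_univ_succAbove _ i]

lemma measurePreserving_insertCoord (i : Fin (m + 1)) :
    MeasurePreserving (insertCoord i) volume volume := by
  have h₁ : MeasurePreserving
      (Prod.map id (WithLp.ofLp (p := 2)) : ℝ × EuclideanSpace ℝ (Fin m) → ℝ × (Fin m → ℝ)) :=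
    (MeasurePreserving.id volume).prod (PiLp.volume_preserving_ofLp (Fin m))
  have h₂ := (volume_preserving_piFinSuccAbove (fun _ : Fin (m + 1) => ℝ) i).symm
  exact (PiLp.volume_preserving_toLp (Fin (m + 1))).comp (h₂.comp h₁)

lemma insertCoord_sub (i : Fin (m + 1)) (t : ℝ) (y z : EuclideanSpace ℝ (Fin m)) :
    insertCoord i (t, y) - insertCoord i (t, z) = insertCoord i (0, y - z) := by
  ext k
  refine Fin.succAboveCases i ?_ (fun j => ?_) k <;> simp

/-- Restriction of a Schwartz function to the affine hyperplane `x i = t`. -/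
lemma exists_schwartz_slice (i : Fin (m + 1)) (t : ℝ)
    (f : 𝓢(EuclideanSpace ℝ (Fin (m + 1)), ℂ)) :
    ∃ g : 𝓢(EuclideanSpace ℝ (Fin m), ℂ), ∀ y, g y = f (insertCoord i (t, y)) := by
  have hanti : AntilipschitzWith 1 fun y => insertCoord i (t, y) := by
    refine AntilipschitzWith.of_le_mul_dist fun y z => ?_
    rw [dist_eq_norm, dist_eq_norm, insertCoord_sub, NNReal.coe_one, one_mul]
    refine le_of_sq_le_sq ?_ (norm_nonneg _)
    rw [norm_sq_insertCoord]
    simp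
  let L : EuclideanSpace ℝ (Fin m) →ₗ[ℝ] EuclideanSpace ℝ (Fin (m + 1)) :=
    { toFun := fun y => insertCoord i (0, y)
      map_add' := fun y z => by
        ext k
        refine Fin.succAboveCases i ?_ (fun j => ?_) k <;> simp
      map_smul' := fun c y => by
        ext k
        refine Fin.succAboveCases i ?_ (fun j => ?_) k <;> simp }
  have htemp : (fun y => insertCoord i (t, y)).HasTemperateGrowth := by
    have h : (fun y => insertCoord i (t, y)) =
        fun y => L.toContinuousLinearMap y + insertCoord i (t, 0) := by
      ext y k
      refine Fin.succAboveCases i ?_ (fun j => ?_) k <;> simp [L]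
    rw [h]
    exact L.toContinuousLinearMap.hasTemperateGrowth.add (.const _)
  exact ⟨SchwartzMap.compCLMOfAntilipschitz ℂ htemp hanti f, fun y => rfl⟩

end Coordinates

section Graphs

variable {m : ℕ}

/-- The coordinate projection of a Lipschitz graph does not decrease the `m`-dimensional Hausdorff
measure by more than a constant factor. -/
lemma map_dropCoord_hausdorffMeasure_le {i : Fin (m + 1)} {K : ℝ≥0}
    {S : Set (EuclideanSpace ℝ (Fin (m + 1)))}
    (hS : ∀ ξ ∈ S, ∀ η ∈ S, dist ξ η ≤ K * dist (dropCoord i ξ) (dropCoord i η)) :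
    ((μH[(m : ℝ)] : Measure (EuclideanSpace ℝ (Fin (m + 1)))).restrict S).map (dropCoord i) ≤
      ((K : ℝ≥0∞) ^ (m : ℝ)) • (μH[(m : ℝ)] : Measure (EuclideanSpace ℝ (Fin m))) := by
  refine Measure.le_iff.2 fun B hB => ?_
  have hP := (continuous_dropCoord i).measurable
  rw [Measure.map_apply hP hB, Measure.restrict_apply (hP hB)]
  have hanti : AntilipschitzWith K fun ξ : S => dropCoord i ξ :=
    AntilipschitzWith.of_le_mul_dist fun ξ η => hS ξ ξ.2 η η.2
  have h := hanti.hausdorffMeasure_preimage_le (Nat.cast_nonneg m) B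
  have himage : dropCoord i ⁻¹' B ∩ S = (↑) '' ((fun ξ : S => dropCoord i ξ) ⁻¹' B) := by
    rw [Set.inter_comm]
    exact (Subtype.image_preimage_coe _ _).symm
  rw [himage, (isometry_subtype_coe (s := S)).hausdorffMeasure_image (Or.inl (Nat.cast_nonneg m))]
  simpa using h

lemma hausdorffMeasure_euclideanSpace_eq_smul (m : ℕ) :
    ∃ c : ℝ≥0, (μH[(m : ℝ)] : Measure (EuclideanSpace ℝ (Fin m))) = c • volume := by
  have : (μH[(m : ℝ)] : Measure (EuclideanSpace ℝ (Fin m))).IsAddHaarMeasure := by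
    simpa using isAddHaarMeasure_hausdorffMeasure (E := EuclideanSpace ℝ (Fin m))
  exact ⟨_, Measure.isAddLeftInvariant_eq_smul _ _⟩

/-- Near a point where the derivative of `a` is nonzero, a level set of `a` is a Lipschitz graph
over some coordinate hyperplane. -/
lemma exists_nhds_dist_le_dropCoord {a : EuclideanSpace ℝ (Fin (m + 1)) → ℝ}
    {L : EuclideanSpace ℝ (Fin (m + 1)) →L[ℝ] ℝ} {ξ₀ : EuclideanSpace ℝ (Fin (m + 1))}
    (hL : HasStrictFDerivAt a L ξ₀) (hL0 : L ≠ 0) :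
    ∃ i : Fin (m + 1), ∃ K : ℝ≥0, ∃ U ∈ 𝓝 ξ₀, ∀ ξ ∈ U, ∀ η ∈ U, a ξ = a η →
      dist ξ η ≤ K * dist (dropCoord i ξ) (dropCoord i η) := by
  obtain ⟨i, hi⟩ : ∃ i, L (EuclideanSpace.single i 1) ≠ 0 := by
    by_contra! h
    refine hL0 (ContinuousLinearMap.coe_injective
      ((EuclideanSpace.basisFun (Fin (m + 1)) ℝ).toBasis.ext fun i => ?_))
    simpa using h i
  have hker : LinearMap.ker ((L : _ →ₗ[ℝ] ℝ).prod (dropCoord i)) = ⊥ := by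
    refine LinearMap.ker_eq_bot'.2 fun v hv => ?_
    obtain ⟨hLv, hPv⟩ : L v = 0 ∧ dropCoord i v = 0 := by simpa using hv
    have hcoord : ∀ j, v (i.succAbove j) = 0 := fun j => by
      rw [← dropCoord_apply, hPv]; rfl
    have hv' : v = v i • EuclideanSpace.single i 1 := by
      ext k
      refine Fin.succAboveCases i ?_ (fun j => ?_) k <;> simp [hcoord]
    have hvi : v i = 0 := by
      rw [hv', map_smul, smul_eq_mul] at hLv
      simpa [hi] using hLv
    rw [hv', hvi, zero_smul]
  obtain ⟨K, hK, hanti⟩ := LinearMap.exists_antilipschitzWith _ hker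
  have hbound : ∀ v, ‖v‖ ≤ K * (|L v| + ‖dropCoord i v‖) := fun v => by
    have h := hanti.le_mul_dist v 0
    rw [map_zero, dist_zero_right, dist_zero_right] at h
    refine h.trans (mul_le_mul_of_nonneg_left ?_ K.2)
    exact max_le (by simp) (by simp)
  have hK' : (0 : ℝ) < K := hK
  have hlittle := hL.isLittleO.def (c := 1 / (2 * K)) (by positivity)
  rw [nhds_prod_eq] at hlittle
  obtain ⟨U, hU, hUU⟩ := Filter.eventually_prod_self_iff'.1 hlittle
  refine ⟨i, 2 * K, U, hU, fun ξ hξ η hη hae => ?_⟩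
  have h₁ := hUU ξ hξ η hη
  rw [hae, sub_self, zero_sub, norm_neg, Real.norm_eq_abs] at h₁
  have h₂ := hbound (ξ - η)
  rw [dist_eq_norm, dist_eq_norm, ← map_sub]
  have h₃ : K * (1 / (2 * K) * ‖ξ - η‖) = ‖ξ - η‖ / 2 := by field_simp
  have h₄ := mul_le_mul_of_nonneg_left h₁ hK'.le
  push_cast
  nlinarith

end Graphs

section Analysis

lemma lintegral_sq_le_mul_lintegral {w : ℝ → ℝ} (hw : Measurable w) (hpos : ∀ t, 0 < w t)
    {g : ℝ → ℝ≥0∞} (hg : Measurable g) :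
    (∫⁻ t, g t) ^ 2 ≤
      (∫⁻ t, ENNReal.ofReal (w t)⁻¹) * ∫⁻ t, ENNReal.ofReal (w t) * g t ^ 2 := by
  have hsq : ∀ x : ℝ≥0∞, (x ^ (1 / 2 : ℝ)) ^ 2 = x := fun x => by
    rw [← ENNReal.rpow_natCast, ← ENNReal.rpow_mul]; norm_num
  have hsplit : ∀ t, g t = (ENNReal.ofReal (w t)⁻¹) ^ (1 / 2 : ℝ) *
      (ENNReal.ofReal (w t) ^ (1 / 2 : ℝ) * g t) := fun t => by
    rw [← mul_assoc, ← ENNReal.mul_rpow_of_nonneg _ _ (by norm_num),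
      ← ENNReal.ofReal_mul (inv_nonneg.2 (hpos t).le), inv_mul_cancel₀ (hpos t).ne']
    simp
  have h := ENNReal.lintegral_mul_le_Lp_mul_Lq volume Real.HolderConjugate.two_two
    (f := fun t => (ENNReal.ofReal (w t)⁻¹) ^ (1 / 2 : ℝ))
    (g := fun t => ENNReal.ofReal (w t) ^ (1 / 2 : ℝ) * g t)
    (by fun_prop) (by fun_prop)
  simp only [Pi.mul_apply, ← hsplit, ENNReal.rpow_two, mul_pow, hsq] at h
  calc (∫⁻ t, g t) ^ 2 ≤ _ := pow_le_pow_left' h 2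
    _ = _ := by rw [mul_pow, hsq, hsq]

variable {m : ℕ}

lemma lintegral_enorm_sq_fourier (g : 𝓢(EuclideanSpace ℝ (Fin m), ℂ)) :
    ∫⁻ η, ‖(𝓕 g) η‖ₑ ^ 2 = ∫⁻ y, ‖g y‖ₑ ^ 2 := by
  have key : ∀ h : 𝓢(EuclideanSpace ℝ (Fin m), ℂ),
      ∫⁻ y, ‖h y‖ₑ ^ 2 = ENNReal.ofReal (∫ y, ‖h y‖ ^ 2) := fun h => by
    have hint : Integrable (fun y => ‖h y‖ ^ 2) := (h.memLp 2).integrable_norm_pow two_ne_zero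
    rw [ofReal_integral_eq_lintegral_ofReal hint (.of_forall fun y => by positivity)]
    simp [ENNReal.ofReal_pow]
  rw [key, key, SchwartzMap.integral_norm_sq_fourier]

lemma lintegral_enorm_sq_integral_exp (g : 𝓢(EuclideanSpace ℝ (Fin m), ℂ)) :
    ∫⁻ η : EuclideanSpace ℝ (Fin m),
        ‖∫ y : EuclideanSpace ℝ (Fin m), cexp (-Complex.I * ((⟪y, η⟫ : ℝ) : ℂ)) * g y‖ₑ ^ 2 =
      ENNReal.ofReal ((2 * π) ^ m) * ∫⁻ y, ‖g y‖ₑ ^ 2 := by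
  have hpi : (2 * π)⁻¹ ≠ 0 := by positivity
  have hscale : ∀ η : EuclideanSpace ℝ (Fin m),
      ∫ y : EuclideanSpace ℝ (Fin m), cexp (-Complex.I * ((⟪y, η⟫ : ℝ) : ℂ)) * g y =
        (𝓕 g) ((2 * π)⁻¹ • η) := fun η => by
    rw [SchwartzMap.fourier_coe, Real.fourier_eq']
    refine integral_congr_ae (.of_forall fun y => ?_)
    simp only [smul_eq_mul, inner_smul_right]
    congr 2
    push_cast
    have : (π : ℂ) ≠ 0 := by exact_mod_cast pi_ne_zero
    field_simp
  have hmeas : Measurable fun η => ‖(𝓕 g) η‖ₑ ^ 2 :=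
    ((𝓕 g).continuous.measurable.enorm).pow_const 2
  simp_rw [hscale]
  rw [← lintegral_map (μ := volume) hmeas (measurable_const_smul (2 * π)⁻¹),
    Measure.map_addHaar_smul volume hpi, lintegral_smul_measure, lintegral_enorm_sq_fourier]
  rw [inv_pow, inv_inv, finrank_euclideanSpace_fin, abs_of_pos (by positivity), smul_eq_mul]

lemma enorm_integral_exp_le (i : Fin (m + 1)) (f : 𝓢(EuclideanSpace ℝ (Fin (m + 1)), ℂ))
    (ξ : EuclideanSpace ℝ (Fin (m + 1))) :
    ‖∫ x : EuclideanSpace ℝ (Fin (m + 1)), cexp (-Complex.I * ((⟪x, ξ⟫ : ℝ) : ℂ)) * f x‖ₑ ≤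
      ∫⁻ t : ℝ, ‖∫ y : EuclideanSpace ℝ (Fin m),
        cexp (-Complex.I * ((⟪y, dropCoord i ξ⟫ : ℝ) : ℂ)) * f (insertCoord i (t, y))‖ₑ := by
  have hmp := measurePreserving_insertCoord i
  have hint : Integrable fun x : EuclideanSpace ℝ (Fin (m + 1)) =>
      cexp (-Complex.I * ((⟪x, ξ⟫ : ℝ) : ℂ)) * f x := by
    refine f.integrable.bdd_mul (c := 1) (by fun_prop) (.of_forall fun x => ?_)
    rw [show -Complex.I * ((⟪x, ξ⟫ : ℝ) : ℂ) = ((-⟪x, ξ⟫ : ℝ) : ℂ) * Complex.I by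
      push_cast; ring, Complex.norm_exp_ofReal_mul_I]
  have hint' : Integrable fun p : ℝ × EuclideanSpace ℝ (Fin m) =>
      cexp (-Complex.I * ((⟪insertCoord i p, ξ⟫ : ℝ) : ℂ)) * f (insertCoord i p) :=
    hmp.integrable_comp_of_integrable hint
  rw [← hmp.map_eq, integral_map hmp.aemeasurable (hmp.map_eq ▸ hint.aestronglyMeasurable),
    Measure.volume_eq_prod, integral_prod _ hint']
  refine (enorm_integral_le_lintegral_enorm _).trans_eq (lintegral_congr fun t => ?_)
  have hsplit : ∀ y : EuclideanSpace ℝ (Fin m),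
      cexp (-Complex.I * ((⟪insertCoord i (t, y), ξ⟫ : ℝ) : ℂ)) * f (insertCoord i (t, y)) =
        cexp (((-(t * ξ i) : ℝ) : ℂ) * Complex.I) *
          (cexp (-Complex.I * ((⟪y, dropCoord i ξ⟫ : ℝ) : ℂ)) * f (insertCoord i (t, y))) := by
    intro y
    rw [inner_insertCoord, ← mul_assoc, ← Complex.exp_add]
    congr 2
    push_cast
    ring
  simp_rw [hsplit]
  rw [integral_const_mul, enorm_mul, ← ofReal_norm (cexp _), Complex.norm_exp_ofReal_mul_I]
  simp

lemma measurable_integral_exp_slice (i : Fin (m + 1))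
    (f : 𝓢(EuclideanSpace ℝ (Fin (m + 1)), ℂ)) :
    Measurable fun p : ℝ × EuclideanSpace ℝ (Fin m) =>
      ∫ y : EuclideanSpace ℝ (Fin m),
        cexp (-Complex.I * ((⟪y, p.2⟫ : ℝ) : ℂ)) * f (insertCoord i (p.1, y)) := by
  have hins := (measurePreserving_insertCoord i).measurable
  have hf := f.continuous.measurable
  have : Measurable fun q : (ℝ × EuclideanSpace ℝ (Fin m)) × EuclideanSpace ℝ (Fin m) =>
      cexp (-Complex.I * ((⟪q.2, q.1.2⟫ : ℝ) : ℂ)) * f (insertCoord i (q.1.1, q.2)) :=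
    Measurable.mul (Continuous.measurable (by fun_prop))
      (hf.comp (hins.comp (by fun_prop)))
  exact this.stronglyMeasurable.integral_prod_right'.measurable

lemma lintegral_inv_bracket_lt_top {θ : ℝ} (hθ : 0 < θ) :
    ∫⁻ t : ℝ, ENNReal.ofReal ((1 + t ^ 2) ^ (1 / 2 + θ))⁻¹ < ∞ := by
  have h := (integrable_rpow_neg_one_add_norm_sq (E := ℝ) (μ := volume) (r := 1 + 2 * θ)
    (by simp; linarith)).lintegral_lt_top
  refine lt_of_le_of_lt (lintegral_mono fun t => ?_) h
  rw [← Real.rpow_neg (by positivity), Real.norm_eq_abs, sq_abs]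
  apply le_of_eq
  ring_nf

lemma enorm_sq_bracket_mul (θ : ℝ) (r : ℝ) (z : ℂ) :
    ‖((Real.sqrt (1 + r ^ 2) ^ (1 / 2 + θ) : ℝ) : ℂ) * z‖ₑ ^ 2 =
      ENNReal.ofReal ((1 + r ^ 2) ^ (1 / 2 + θ)) * ‖z‖ₑ ^ 2 := by
  have h0 : 0 ≤ 1 + r ^ 2 := by positivity
  rw [enorm_mul, mul_pow, ← ofReal_norm (_ : ℂ), Complex.norm_real, Real.norm_eq_abs,
    abs_of_nonneg (by positivity), ← ENNReal.ofReal_pow (by positivity), ← Real.rpow_natCast,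
    ← Real.rpow_mul (by positivity), mul_comm (1 / 2 + θ), Real.rpow_mul (by positivity),
    Real.rpow_natCast, Real.sq_sqrt h0]

/-- The trace estimate on a Lipschitz graph; the constant depends only on the Lipschitz bound. -/
lemma exists_lintegral_graph_le {θ : ℝ} (hθ : 0 < θ) (i : Fin (m + 1)) (K : ℝ≥0) :
    ∃ C : ℝ≥0, ∀ S : Set (EuclideanSpace ℝ (Fin (m + 1))),
      (∀ ξ ∈ S, ∀ η ∈ S, dist ξ η ≤ K * dist (dropCoord i ξ) (dropCoord i η)) →
      ∀ f : 𝓢(EuclideanSpace ℝ (Fin (m + 1)), ℂ),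
      ∫⁻ ξ in S, ‖FT (m + 1) (fun x => f x) ξ‖ₑ ^ 2 ∂μH[(m : ℝ)] ≤
        C * ∫⁻ x, ‖((Real.sqrt (1 + ‖x‖ ^ 2) ^ (1 / 2 + θ) : ℝ) : ℂ) * f x‖ₑ ^ 2 := by
  obtain ⟨c, hc⟩ := hausdorffMeasure_euclideanSpace_eq_smul m
  set w : ℝ → ℝ := fun t => (1 + t ^ 2) ^ (1 / 2 + θ) with hw
  have hwpos : ∀ t, 0 < w t := fun t => by positivity
  have hwmeas : Measurable w := by fun_prop
  set W : ℝ≥0∞ := ∫⁻ t, ENNReal.ofReal (w t)⁻¹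
  have hWfin : W ≠ ∞ := (lintegral_inv_bracket_lt_top hθ).ne
  set A : ℝ≥0∞ := ‖((2 * π) ^ (-((m + 1 : ℕ) : ℝ) / 2) : ℝ)‖ₑ ^ 2 with hA
  set D : ℝ≥0∞ := A * W * ((K : ℝ≥0∞) ^ (m : ℝ) * c * ENNReal.ofReal ((2 * π) ^ m)) with hD
  have hDfin : D ≠ ∞ := by
    have h₁ : A ≠ ∞ := by simp [hA]
    have h₂ : (K : ℝ≥0∞) ^ (m : ℝ) ≠ ∞ := by simp
    finiteness
  refine ⟨D.toNNReal, fun S hS f => ?_⟩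
  rw [ENNReal.coe_toNNReal hDfin]
  set G : ℝ × EuclideanSpace ℝ (Fin m) → ℂ := fun p =>
    ∫ y : EuclideanSpace ℝ (Fin m),
      cexp (-Complex.I * ((⟪y, p.2⟫ : ℝ) : ℂ)) * f (insertCoord i (p.1, y)) with hG
  have hGmeas : Measurable G := measurable_integral_exp_slice i f
  have hpoint : ∀ ξ, ‖FT (m + 1) (fun x => f x) ξ‖ₑ ^ 2 ≤
      A * W * ∫⁻ t, ENNReal.ofReal (w t) * ‖G (t, dropCoord i ξ)‖ₑ ^ 2 := fun ξ => by
    rw [FT, enorm_smul, mul_pow, mul_assoc]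
    gcongr
    refine (pow_le_pow_left' (enorm_integral_exp_le i f ξ) 2).trans ?_
    exact lintegral_sq_le_mul_lintegral hwmeas hwpos
      (hGmeas.comp (measurable_id.prodMk measurable_const)).enorm
  have hH : Measurable fun p : EuclideanSpace ℝ (Fin m) × ℝ =>
      ENNReal.ofReal (w p.2) * ‖G (p.2, p.1)‖ₑ ^ 2 := by fun_prop
  have hslice : ∀ t, ∫⁻ η, ‖G (t, η)‖ₑ ^ 2 =
      ENNReal.ofReal ((2 * π) ^ m) * ∫⁻ y, ‖f (insertCoord i (t, y))‖ₑ ^ 2 := fun t => by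
    obtain ⟨g, hg⟩ := exists_schwartz_slice i t f
    simp only [hG, ← hg]
    exact lintegral_enorm_sq_integral_exp g
  have hfmeas : Measurable fun p : ℝ × EuclideanSpace ℝ (Fin m) => f (insertCoord i p) :=
    f.continuous.measurable.comp (measurePreserving_insertCoord i).measurable
  have hplanch : ∫⁻ η, ∫⁻ t, ENNReal.ofReal (w t) * ‖G (t, η)‖ₑ ^ 2 ≤
      ENNReal.ofReal ((2 * π) ^ m) *
        ∫⁻ x, ‖((Real.sqrt (1 + ‖x‖ ^ 2) ^ (1 / 2 + θ) : ℝ) : ℂ) * f x‖ₑ ^ 2 := by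
    have hm : Measurable fun x : EuclideanSpace ℝ (Fin (m + 1)) =>
        ‖((Real.sqrt (1 + ‖x‖ ^ 2) ^ (1 / 2 + θ) : ℝ) : ℂ) * f x‖ₑ ^ 2 := by
      have := f.continuous.measurable
      fun_prop
    rw [lintegral_lintegral_swap hH.aemeasurable,
      ← (measurePreserving_insertCoord i).lintegral_comp hm,
      Measure.volume_eq_prod, lintegral_prod _ (by
        exact (hm.comp (measurePreserving_insertCoord i).measurable).aemeasurable),
      ← lintegral_const_mul' _ _ ENNReal.ofReal_ne_top]
    refine lintegral_mono fun t => ?_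
    rw [lintegral_const_mul' _ _ ENNReal.ofReal_ne_top, hslice, mul_left_comm,
      ← lintegral_const_mul' _ _ ENNReal.ofReal_ne_top]
    gcongr with y
    rw [enorm_sq_bracket_mul, norm_sq_insertCoord]
    gcongr
    simp only [hw]
    gcongr
    nlinarith [sq_nonneg ‖y‖]
  calc ∫⁻ ξ in S, ‖FT (m + 1) (fun x => f x) ξ‖ₑ ^ 2 ∂μH[(m : ℝ)]
      ≤ ∫⁻ ξ in S, A * W * (∫⁻ t, ENNReal.ofReal (w t) * ‖G (t, dropCoord i ξ)‖ₑ ^ 2)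
          ∂μH[(m : ℝ)] := lintegral_mono hpoint
    _ = A * W * ∫⁻ η, (∫⁻ t, ENNReal.ofReal (w t) * ‖G (t, η)‖ₑ ^ 2)
          ∂((μH[(m : ℝ)] : Measure (EuclideanSpace ℝ (Fin (m + 1)))).restrict S).map
            (dropCoord i) := by
        rw [lintegral_map hH.lintegral_prod_right' (continuous_dropCoord i).measurable,
          lintegral_const_mul' _ _ (by finiteness)]
    _ ≤ A * W * ∫⁻ η, (∫⁻ t, ENNReal.ofReal (w t) * ‖G (t, η)‖ₑ ^ 2)
          ∂(((K : ℝ≥0∞) ^ (m : ℝ)) • (μH[(m : ℝ)] : Measure (EuclideanSpace ℝ (Fin m)))) := by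
        gcongr
        exact map_dropCoord_hausdorffMeasure_le hS
    _ = A * W * ((K : ℝ≥0∞) ^ (m : ℝ) * (c *
          ∫⁻ η, ∫⁻ t, ENNReal.ofReal (w t) * ‖G (t, η)‖ₑ ^ 2)) := by
        rw [hc, lintegral_smul_measure, lintegral_smul_measure]
        rfl
    _ ≤ A * W * ((K : ℝ≥0∞) ^ (m : ℝ) * (c * (ENNReal.ofReal ((2 * π) ^ m) *
          ∫⁻ x, ‖((Real.sqrt (1 + ‖x‖ ^ 2) ^ (1 / 2 + θ) : ℝ) : ℂ) * f x‖ₑ ^ 2))) := by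
        gcongr
    _ = _ := by rw [hD]; ring

end Analysis

section LevelSets

variable {E : Type*} [NormedAddCommGroup E] [NormedSpace ℝ E] {a : E → ℝ}

lemma apply_zero_of_homogeneous (ha_hom : ∀ t : ℝ, 0 < t → ∀ ξ, a (t • ξ) = t * a ξ) :
    a 0 = 0 := by
  have := ha_hom 2 two_pos 0
  rw [smul_zero] at this
  linarith

lemma isCompact_level_set_of_homogeneous [FiniteDimensional ℝ E] (ha_cont : Continuous a)
    (ha_hom : ∀ t : ℝ, 0 < t → ∀ ξ, a (t • ξ) = t * a ξ) (ha_pos : ∀ ξ, ξ ≠ 0 → 0 < a ξ) (τ : ℝ) :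
    IsCompact {ξ | a ξ = τ} := by
  have : ProperSpace E := FiniteDimensional.proper ℝ E
  obtain ⟨c, hc, hca⟩ := (isCompact_sphere (0 : E) 1).exists_forall_le' ha_cont.continuousOn
    (a := 0) fun ξ hξ => ha_pos ξ (ne_zero_of_mem_unit_sphere ⟨ξ, hξ⟩)
  refine (isCompact_closedBall (0 : E) (τ / c)).of_isClosed_subset
    (isClosed_eq ha_cont continuous_const) fun ξ hξ => ?_
  rw [mem_closedBall_zero_iff, le_div_iff₀ hc, ← hξ]
  rcases eq_or_ne ξ 0 with rfl | h0
  · simp [apply_zero_of_homogeneous ha_hom]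
  · have hn : 0 < ‖ξ‖ := norm_pos_iff.2 h0
    have h := hca (‖ξ‖⁻¹ • ξ) (by simp [norm_smul, hn.ne'])
    rw [ha_hom _ (inv_pos.2 hn), inv_mul_eq_div, le_div_iff₀ hn] at h
    linarith

/-- Euler's identity. -/
lemma fderiv_apply_self_of_homogeneous {L : E →L[ℝ] ℝ} {ξ : E} (hL : HasFDerivAt a L ξ)
    (ha_hom : ∀ t : ℝ, 0 < t → ∀ ξ, a (t • ξ) = t * a ξ) : L ξ = a ξ := by
  have h₁ : HasDerivAt (fun t : ℝ => a (t • ξ)) (L ((1 : ℝ) • ξ)) 1 := by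
    have hline : HasDerivAt (fun t : ℝ => t • ξ) ((1 : ℝ) • ξ) 1 :=
      (hasDerivAt_id (1 : ℝ)).smul_const ξ
    exact HasFDerivAt.comp_hasDerivAt (1 : ℝ) (by rwa [one_smul]) hline
  have h₂ : HasDerivAt (fun t : ℝ => a (t • ξ)) (1 * a ξ) 1 := by
    refine ((hasDerivAt_id (1 : ℝ)).mul_const (a ξ)).congr_of_eventuallyEq ?_
    filter_upwards [lt_mem_nhds one_pos] with t ht
    exact ha_hom t ht ξ
  simpa using h₁.unique h₂

end LevelSets

theorem uniform_trace_estimate (n : ℕ) (hn : 2 ≤ n) (θ : ℝ) (hθ : 0 < θ)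
    (a : EuclideanSpace ℝ (Fin n) → ℝ)
    (ha_cont : Continuous a)
    (ha_smooth : ContDiffOn ℝ (⊤ : ℕ∞) a {(0 : EuclideanSpace ℝ (Fin n))}ᶜ)
    (ha_hom : ∀ t : ℝ, 0 < t → ∀ ξ, a (t • ξ) = t * a ξ)
    (ha_pos : ∀ ξ : EuclideanSpace ℝ (Fin n), ξ ≠ 0 → 0 < a ξ) :
    ∃ C > 0, ∀ τ : ℝ, 0 < τ → ∀ f : SchwartzMap (EuclideanSpace ℝ (Fin n)) ℂ,
      eLpNorm (FT n (fun x => f x)) 2 (μH[(n : ℝ) - 1].restrict {ξ | a ξ = τ})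
        ≤ ENNReal.ofReal C *
            eLpNorm (fun x => ((Real.sqrt (1 + ‖x‖ ^ 2) ^ (1 / 2 + θ) : ℝ) : ℂ) * f x) 2 volume := by
  obtain ⟨m, rfl⟩ : ∃ m, n = m + 1 := ⟨n - 1, by omega⟩
  have hdim : ((m + 1 : ℕ) : ℝ) - 1 = m := by push_cast; ring
  rw [hdim]
  have hcover : ∃ C : ℝ≥0, ∀ τ : ℝ, 0 < τ → ∀ f : 𝓢(EuclideanSpace ℝ (Fin (m + 1)), ℂ),
      ∫⁻ ξ in {ξ | τ⁻¹ • ξ ∈ {ξ | a ξ = 1}}, ‖FT (m + 1) (fun x => f x) ξ‖ₑ ^ 2 ∂μH[(m : ℝ)] ≤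
        C * ∫⁻ x, ‖((Real.sqrt (1 + ‖x‖ ^ 2) ^ (1 / 2 + θ) : ℝ) : ℂ) * f x‖ₑ ^ 2 := by
    refine (isCompact_level_set_of_homogeneous ha_cont ha_hom ha_pos 1).induction_on
      (p := fun S => ∃ C : ℝ≥0, ∀ τ : ℝ, 0 < τ → ∀ f : 𝓢(EuclideanSpace ℝ (Fin (m + 1)), ℂ),
        ∫⁻ ξ in {ξ | τ⁻¹ • ξ ∈ S}, ‖FT (m + 1) (fun x => f x) ξ‖ₑ ^ 2 ∂μH[(m : ℝ)] ≤
          C * ∫⁻ x, ‖((Real.sqrt (1 + ‖x‖ ^ 2) ^ (1 / 2 + θ) : ℝ) : ℂ) * f x‖ₑ ^ 2)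
      ⟨0, by simp⟩ ?_ ?_ ?_
    · rintro S T hST ⟨C, hC⟩
      exact ⟨C, fun τ hτ f => (lintegral_mono_set
        (Set.preimage_mono (f := fun ξ => τ⁻¹ • ξ) hST)).trans (hC τ hτ f)⟩
    · rintro S T ⟨C, hC⟩ ⟨D, hD⟩
      refine ⟨C + D, fun τ hτ f => ?_⟩
      rw [ENNReal.coe_add, add_mul]
      exact (lintegral_union_le _ {ξ | τ⁻¹ • ξ ∈ S} {ξ | τ⁻¹ • ξ ∈ T}).trans
        (add_le_add (hC τ hτ f) (hD τ hτ f))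
    · intro ξ₀ hξ₀
      have hξ₀' : a ξ₀ = 1 := hξ₀
      have hne : ξ₀ ≠ 0 := by
        rintro rfl
        simp [apply_zero_of_homogeneous ha_hom] at hξ₀'
      have hstrict := (ha_smooth.contDiffAt (isOpen_compl_singleton.mem_nhds hne)).hasStrictFDerivAt
        (by simp)
      have hL0 : fderiv ℝ a ξ₀ ≠ 0 := fun h => by
        have := fderiv_apply_self_of_homogeneous hstrict.hasFDerivAt ha_hom
        simp [h, hξ₀'] at this
      obtain ⟨i, K, U, hU, hUK⟩ := exists_nhds_dist_le_dropCoord hstrict hL0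
      obtain ⟨C, hC⟩ := exists_lintegral_graph_le hθ i K
      refine ⟨U ∩ {ξ | a ξ = 1}, Filter.inter_mem (mem_nhdsWithin_of_mem_nhds hU)
        self_mem_nhdsWithin, C, fun τ hτ f => hC _ (fun ξ hξ η hη => ?_) f⟩
      have h := hUK _ hξ.1 _ hη.1 (hξ.2.trans hη.2.symm)
      rw [map_smul, map_smul, dist_smul₀, dist_smul₀, mul_left_comm] at h
      exact le_of_mul_le_mul_left h (by simpa using hτ.ne')
  obtain ⟨C, hC⟩ := hcover
  refine ⟨Real.sqrt C + 1, by positivity, fun τ hτ f => ?_⟩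
  have hlevel : {ξ | a ξ = τ} = {ξ | τ⁻¹ • ξ ∈ {ξ | a ξ = 1}} := by
    ext ξ
    rw [Set.mem_ofPred_eq, Set.mem_ofPred_eq, Set.mem_ofPred_eq, ha_hom _ (inv_pos.2 hτ),
      inv_mul_eq_one₀ hτ.ne', eq_comm]
  have hsq := hC τ hτ f
  rw [← hlevel] at hsq
  have hCle : (C : ℝ≥0∞) ≤ ENNReal.ofReal (Real.sqrt C + 1) ^ 2 := by
    rw [← ENNReal.ofReal_pow (by positivity), ← ENNReal.ofReal_coe_nnreal]
    refine ENNReal.ofReal_le_ofReal ?_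
    nlinarith [Real.sq_sqrt C.coe_nonneg, Real.sqrt_nonneg C]
  refine (ENNReal.pow_le_pow_left_iff two_ne_zero).1 ?_
  rw [mul_pow]
  have key : ∀ {g : EuclideanSpace ℝ (Fin (m + 1)) → ℂ}
      {μ : Measure (EuclideanSpace ℝ (Fin (m + 1)))}, eLpNorm g 2 μ ^ 2 = ∫⁻ x, ‖g x‖ₑ ^ 2 ∂μ := by
    intro g μ
    simpa using eLpNorm_nnreal_pow_eq_lintegral (f := g) (μ := μ) (p := 2) two_ne_zero
  rw [key, key]
  exact hsq.trans (by gcongr)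
end
end

section
/- Let n ≥ 2 and 0 < θ < (n−1)/2. There exists a constant C > 0 such that for every τ > 0 and every Schwartz function f on ℝⁿ, ‖f̂‖_{L²(Σ(τ))} ≤ C τ^{θ} ‖⟨x⟩^{1/2+θ} f‖_{L²(ℝⁿ)}, where the constant C is independent of τ. -/
open MeasureTheory Real Complex RealInnerProductSpace

noncomputable section

/-- The affine embedding of `ℝᵐ` onto the hyperplane `{ξ | ξ i = ε}` of `ℝᵐ⁺¹`. -/
def facetMap {m : ℕ} (i : Fin (m + 1)) (ε : ℝ) (y : Fin m → ℝ) : EuclideanSpace ℝ (Fin (m + 1)) :=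
  WithLp.toLp 2 (i.insertNth ε y)

lemma contDiff_facetMap {m : ℕ} (i : Fin (m + 1)) (ε : ℝ) {k : WithTop ℕ∞} :
    ContDiff ℝ k (facetMap i ε) := by
  rw [contDiff_euclidean]
  rw [Fin.forall_iff_succAbove i]
  constructor
  · simpa [facetMap] using contDiff_const
  · intro j
    simpa [facetMap] using contDiff_apply ℝ ℝ j

lemma facetMap_ne_zero {m : ℕ} (i : Fin (m + 1)) {ε : ℝ} (hε : ε ≠ 0) (y : Fin m → ℝ) :
    facetMap i ε y ≠ 0 := by
  intro h
  apply hε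
  simpa [facetMap] using congrArg (fun ξ : EuclideanSpace ℝ (Fin (m + 1)) => ξ i) h

/-- Projection from the origin onto the hyperplane `{ξ | ξ i = ±1}`, in coordinates. -/
def facetCoord {m : ℕ} (i : Fin (m + 1)) (ξ : EuclideanSpace ℝ (Fin (m + 1))) : Fin m → ℝ :=
  fun j => ξ (i.succAbove j) / |ξ i|

lemma facetMap_facetCoord {m : ℕ} (i : Fin (m + 1)) {ε : ℝ}
    {ξ : EuclideanSpace ℝ (Fin (m + 1))} (hξ : ξ i = ε * |ξ i|) (h0 : ξ i ≠ 0) :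
    facetMap i ε (facetCoord i ξ) = |ξ i|⁻¹ • ξ := by
  ext j
  revert j
  rw [Fin.forall_iff_succAbove i]
  have : |ξ i| ≠ 0 := abs_ne_zero.2 h0
  constructor
  · simp only [facetMap, Fin.insertNth_apply_same, PiLp.smul_apply, smul_eq_mul]
    field_simp
    exact hξ.symm
  · intro j
    simp [facetMap, facetCoord, div_eq_inv_mul]

lemma dist_facetCoord_le {m : ℕ} (i : Fin (m + 1)) {c : ℝ} (hc : 0 < c)
    {ξ ζ : EuclideanSpace ℝ (Fin (m + 1))} (hξ : c ≤ |ξ i|) (hζ : c ≤ |ζ i|)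
    (hmax : ∀ j, |ζ j| ≤ |ζ i|) :
    dist (facetCoord i ξ) (facetCoord i ζ) ≤ 2 / c * dist ξ ζ := by
  rw [dist_pi_le_iff (by positivity)]
  intro j
  have hξ' : 0 < |ξ i| := hc.trans_le hξ
  have hζ' : 0 < |ζ i| := hc.trans_le hζ
  have coord : ∀ k, |ξ k - ζ k| ≤ dist ξ ζ := fun k => by
    rw [dist_eq_norm]
    simpa using PiLp.norm_apply_le (ξ - ζ) k
  have key : facetCoord i ξ j - facetCoord i ζ j =
      |ξ i|⁻¹ * ((ξ (i.succAbove j) - ζ (i.succAbove j))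
        + ζ (i.succAbove j) / |ζ i| * (|ζ i| - |ξ i|)) := by
    simp only [facetCoord]
    field_simp
    ring
  rw [Real.dist_eq, key, abs_mul, abs_inv, abs_abs]
  have h1 : abs (ζ (i.succAbove j) / abs (ζ i)) ≤ 1 := by
    rw [abs_div, abs_abs]
    exact div_le_one_of_le₀ (hmax _) hζ'.le
  have h2 : |(|ζ i| - |ξ i|)| ≤ dist ξ ζ :=
    (abs_abs_sub_abs_le_abs_sub _ _).trans ((abs_sub_comm _ _).trans_le (coord i))
  calc |ξ i|⁻¹ * |(ξ (i.succAbove j) - ζ (i.succAbove j))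
        + ζ (i.succAbove j) / |ζ i| * (|ζ i| - |ξ i|)|
      ≤ c⁻¹ * (dist ξ ζ + 1 * dist ξ ζ) := by
        gcongr
        refine (abs_add_le _ _).trans ?_
        rw [abs_mul]
        gcongr
        exact coord _
    _ = 2 / c * dist ξ ζ := by ring

section LevelSet

variable {m : ℕ} {a : EuclideanSpace ℝ (Fin (m + 1)) → ℝ}

/-- The facets of the cube, projected radially to the level set `{a = 1}`. -/
def radialChart (a : EuclideanSpace ℝ (Fin (m + 1)) → ℝ) (i : Fin (m + 1)) (ε : ℝ)
    (y : Fin m → ℝ) : EuclideanSpace ℝ (Fin (m + 1)) :=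
  (a (facetMap i ε y))⁻¹ • facetMap i ε y

lemma contDiff_radialChart
    (ha_smooth : ContDiffOn ℝ (⊤ : ℕ∞) a {(0 : EuclideanSpace ℝ (Fin (m + 1)))}ᶜ)
    (ha_pos : ∀ ξ : EuclideanSpace ℝ (Fin (m + 1)), ξ ≠ 0 → 0 < a ξ)
    (i : Fin (m + 1)) {ε : ℝ} (hε : ε ≠ 0) : ContDiff ℝ 1 (radialChart a i ε) := by
  have h1 : ContDiff ℝ 1 (fun y => a (facetMap i ε y)) := by
    rw [contDiff_iff_contDiffAt]
    intro y
    have : ContDiffAt ℝ (⊤ : ℕ∞) a (facetMap i ε y) :=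
      ha_smooth.contDiffAt (isOpen_compl_singleton.mem_nhds (facetMap_ne_zero i hε y))
    exact (this.of_le (by exact_mod_cast le_top)).comp y (contDiff_facetMap i ε).contDiffAt
  exact (h1.inv fun y => (ha_pos _ (facetMap_ne_zero i hε y)).ne').smul (contDiff_facetMap i ε)

lemma exists_lipschitz_cover
    (ha_cont : Continuous a)
    (ha_smooth : ContDiffOn ℝ (⊤ : ℕ∞) a {(0 : EuclideanSpace ℝ (Fin (m + 1)))}ᶜ)
    (ha_hom : ∀ t : ℝ, 0 < t → ∀ ξ, a (t • ξ) = t * a ξ)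
    (ha_pos : ∀ ξ : EuclideanSpace ℝ (Fin (m + 1)), ξ ≠ 0 → 0 < a ξ)
    (i : Fin (m + 1)) {ε : ℝ} (hε : ε ≠ 0) :
    ∃ K : NNReal, ∀ S : Set (EuclideanSpace ℝ (Fin (m + 1))),
      (∀ ξ ∈ S, a ξ = 1 ∧ ξ i ≠ 0 ∧ ξ i = ε * |ξ i| ∧ ∀ j, |ξ j| ≤ |ξ i|) →
        μH[(m : ℝ)] S ≤ K * Metric.ediam S ^ m ∧
          S ⊆ radialChart a i ε '' Metric.closedBall 0 1 := by
  have hcpt : IsCompact (Metric.closedBall (0 : Fin m → ℝ) 1) := isCompact_closedBall 0 1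
  obtain ⟨L, hL⟩ := (contDiff_radialChart ha_smooth ha_pos i hε).locallyLipschitz
    |>.locallyLipschitzOn (s := Metric.closedBall 0 1) |>.exists_lipschitzOnWith_of_compact hcpt
  obtain ⟨M, hM⟩ := hcpt.exists_bound_of_continuousOn (f := fun y => a (facetMap i ε y))
    (ha_cont.comp (contDiff_facetMap (k := 0) i ε).continuous).continuousOn
  have hM0 : 0 < M := (abs_pos.2 (ha_pos _ (facetMap_ne_zero i hε 0)).ne').trans_le
    (hM 0 (by simp))
  refine ⟨L ^ m * (2 * M).toNNReal ^ m, fun S hS => ?_⟩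
  have hball : ∀ ξ ∈ S, facetCoord i ξ ∈ Metric.closedBall (0 : Fin m → ℝ) 1 := by
    intro ξ hξ
    rw [mem_closedBall_zero_iff, pi_norm_le_iff_of_nonneg zero_le_one]
    intro j
    rw [facetCoord, Real.norm_eq_abs, abs_div, abs_abs]
    exact div_le_one_of_le₀ ((hS ξ hξ).2.2.2 _) (abs_nonneg _)
  have hval : ∀ ξ ∈ S, a (facetMap i ε (facetCoord i ξ)) = |ξ i|⁻¹ := by
    intro ξ hξ
    obtain ⟨h1, h2, h3, -⟩ := hS ξ hξ
    rw [facetMap_facetCoord i h3 h2, ha_hom _ (by positivity), h1, mul_one]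
  have hchart : ∀ ξ ∈ S, radialChart a i ε (facetCoord i ξ) = ξ := by
    intro ξ hξ
    obtain ⟨h1, h2, h3, -⟩ := hS ξ hξ
    rw [radialChart, hval ξ hξ, facetMap_facetCoord i h3 h2, inv_inv, smul_smul,
      mul_inv_cancel₀ (abs_ne_zero.2 h2), one_smul]
  have hlow : ∀ ξ ∈ S, M⁻¹ ≤ |ξ i| := by
    intro ξ hξ
    have := hM _ (hball ξ hξ)
    rw [hval ξ hξ, norm_inv, Real.norm_eq_abs, abs_abs] at this
    exact inv_le_of_inv_le₀ (abs_pos.2 (hS ξ hξ).2.1) this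
  have hcoord : LipschitzOnWith (2 * M).toNNReal (facetCoord i) S := by
    refine LipschitzOnWith.of_dist_le_mul fun ξ hξ ζ hζ => ?_
    rw [Real.coe_toNNReal _ (by positivity)]
    simpa using dist_facetCoord_le i (inv_pos.2 hM0) (hlow ξ hξ) (hlow ζ hζ) (hS ζ hζ).2.2.2
  have himg : radialChart a i ε '' (facetCoord i '' S) = S := by
    rw [Set.image_image]
    exact (Set.image_congr hchart).trans (Set.image_id' S)
  have hsub : facetCoord i '' S ⊆ Metric.closedBall 0 1 := Set.image_subset_iff.2 hball
  constructor
  · have hdiam : Metric.ediam (facetCoord i '' S) ≤ (2 * M).toNNReal * Metric.ediam S :=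
      Metric.ediam_image_le_iff.2 fun ξ hξ ζ hζ => (hcoord hξ hζ).trans
        (by gcongr; exact Metric.edist_le_ediam_of_mem hξ hζ)
    calc μH[(m : ℝ)] S = μH[(m : ℝ)] (radialChart a i ε '' (facetCoord i '' S)) := by rw [himg]
      _ ≤ (L : ENNReal) ^ (m : ℝ) * μH[(m : ℝ)] (facetCoord i '' S) :=
          (hL.mono hsub).hausdorffMeasure_image_le (Nat.cast_nonneg m)
      _ ≤ (L : ENNReal) ^ (m : ℝ) * Metric.ediam (facetCoord i '' S) ^ m := by
          gcongr
          have h := Real.volume_pi_le_diam_pow (facetCoord i '' S)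
          rw [← hausdorffMeasure_pi_real] at h
          simpa using h
      _ ≤ (L : ENNReal) ^ m * ((2 * M).toNNReal * Metric.ediam S) ^ m := by
          rw [ENNReal.rpow_natCast]
          gcongr
      _ = _ := by push_cast; ring
  · rw [← himg]
    exact Set.image_mono hsub

lemma levelSet_one_regular
    (ha_cont : Continuous a)
    (ha_smooth : ContDiffOn ℝ (⊤ : ℕ∞) a {(0 : EuclideanSpace ℝ (Fin (m + 1)))}ᶜ)
    (ha_hom : ∀ t : ℝ, 0 < t → ∀ ξ, a (t • ξ) = t * a ξ)
    (ha_pos : ∀ ξ : EuclideanSpace ℝ (Fin (m + 1)), ξ ≠ 0 → 0 < a ξ) :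
    (∃ K : NNReal, ∀ S ⊆ {ξ | a ξ = 1}, μH[(m : ℝ)] S ≤ K * Metric.ediam S ^ m) ∧
      Bornology.IsBounded {ξ | a ξ = 1} := by
  have ha0 : a 0 = 0 := by
    have := ha_hom 2 two_pos 0
    rw [smul_zero] at this
    linarith
  have hε : ∀ b : Bool, (cond b 1 (-1) : ℝ) ≠ 0 := by rintro (_ | _) <;> simp
  choose K hK using fun p : Fin (m + 1) × Bool =>
    exists_lipschitz_cover ha_cont ha_smooth ha_hom ha_pos p.1 (hε p.2)
  let piece (p : Fin (m + 1) × Bool) : Set (EuclideanSpace ℝ (Fin (m + 1))) :=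
    {ξ | a ξ = 1 ∧ ξ p.1 ≠ 0 ∧ ξ p.1 = (cond p.2 1 (-1) : ℝ) * |ξ p.1| ∧ ∀ j, |ξ j| ≤ |ξ p.1|}
  have hcover : {ξ | a ξ = 1} ⊆ ⋃ p, piece p := by
    intro ξ hξ
    obtain ⟨i, hi⟩ := Finite.exists_max fun j => |ξ j|
    have h0 : ξ i ≠ 0 := by
      intro h
      have : ξ = 0 := by
        ext j
        have := hi j
        rw [h, abs_zero] at this
        simpa using this
      rw [Set.mem_ofPred_eq, this, ha0] at hξ
      exact zero_ne_one hξ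
    rw [Set.mem_iUnion]
    rcases le_total 0 (ξ i) with h | h
    · exact ⟨(i, true), hξ, h0, by simp [abs_of_nonneg h], hi⟩
    · exact ⟨(i, false), hξ, h0, by simp [abs_of_nonpos h], hi⟩
  constructor
  · refine ⟨∑ p, K p, fun S hS => ?_⟩
    calc μH[(m : ℝ)] S ≤ μH[(m : ℝ)] (⋃ p, S ∩ piece p) := by
          refine measure_mono ?_
          rw [← Set.inter_iUnion]
          exact fun ξ hξ => ⟨hξ, hcover (hS hξ)⟩
      _ ≤ ∑ p, μH[(m : ℝ)] (S ∩ piece p) := measure_iUnion_fintype_le _ _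
      _ ≤ ∑ p, K p * Metric.ediam S ^ m := by
          gcongr with p
          refine (hK p _ fun ξ hξ => hξ.2).1.trans ?_
          gcongr
          exact Set.inter_subset_left
      _ = _ := by rw [← Finset.sum_mul]; push_cast; rfl
  · refine Bornology.IsBounded.subset ?_ hcover
    rw [Bornology.isBounded_iUnion]
    intro p
    refine Bornology.IsBounded.subset ?_ (hK p (piece p) fun ξ hξ => hξ).2
    exact ((isCompact_closedBall _ _).image
      (contDiff_radialChart ha_smooth ha_pos p.1 (hε p.2)).continuous).isBounded

open scoped Pointwise in
lemma levelSet_measure_le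
    (ha_cont : Continuous a)
    (ha_smooth : ContDiffOn ℝ (⊤ : ℕ∞) a {(0 : EuclideanSpace ℝ (Fin (m + 1)))}ᶜ)
    (ha_hom : ∀ t : ℝ, 0 < t → ∀ ξ, a (t • ξ) = t * a ξ)
    (ha_pos : ∀ ξ : EuclideanSpace ℝ (Fin (m + 1)), ξ ≠ 0 → 0 < a ξ) :
    ∃ K : NNReal, ∀ τ : ℝ, 0 < τ →
      (∀ ξ r, 0 ≤ r → μH[(m : ℝ)].restrict {ξ | a ξ = τ} (Metric.closedBall ξ r) ≤
        K * ENNReal.ofReal r ^ m) ∧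
      μH[(m : ℝ)].restrict {ξ | a ξ = τ} Set.univ ≤ K * ENNReal.ofReal τ ^ m := by
  obtain ⟨⟨K, hK⟩, hbdd⟩ := levelSet_one_regular ha_cont ha_smooth ha_hom ha_pos
  have hscale : ∀ τ : ℝ, 0 < τ → ∀ S ⊆ {ξ | a ξ = τ},
      μH[(m : ℝ)] S ≤ K * Metric.ediam S ^ m := by
    intro τ hτ S hS
    have hsub : τ⁻¹ • S ⊆ {ξ | a ξ = 1} := by
      rintro _ ⟨ξ, hξ, rfl⟩
      have : a ξ = τ := hS hξ
      simp [ha_hom _ (inv_pos.2 hτ), this, hτ.ne']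
    have h := hK _ hsub
    have hS' : S = τ • (τ⁻¹ • S) := by rw [smul_inv_smul₀ hτ.ne']
    rw [hS', Measure.hausdorffMeasure_smul₀ (Nat.cast_nonneg m) hτ.ne', ediam_smul₀,
      NNReal.rpow_natCast, ENNReal.smul_def, ENNReal.smul_def, smul_eq_mul, smul_eq_mul, mul_pow]
    push_cast
    calc _ ≤ _ := mul_le_mul_right h _
      _ = _ := by ring
  refine ⟨K * 2 ^ m + K * (Metric.ediam {ξ | a ξ = 1}).toNNReal ^ m, fun τ hτ => ⟨?_, ?_⟩⟩
  · intro ξ r hr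
    rw [Measure.restrict_apply measurableSet_closedBall]
    calc _ ≤ _ := hscale τ hτ _ Set.inter_subset_right
      _ ≤ K * (2 * ENNReal.ofReal r) ^ m := by
        gcongr
        refine (Metric.ediam_mono Set.inter_subset_left).trans ?_
        rw [← Metric.closedEBall_ofReal hr]
        exact Metric.ediam_closedEBall_le
      _ = (K * 2 ^ m : NNReal) * ENNReal.ofReal r ^ m := by push_cast; ring
      _ ≤ _ := by gcongr; exact le_self_add
  · rw [Measure.restrict_apply_univ]
    have hsub : {ξ | a ξ = τ} ⊆ τ • {ξ | a ξ = 1} := by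
      intro ξ hξ
      refine ⟨τ⁻¹ • ξ, ?_, by simp [hτ.ne']⟩
      have : a ξ = τ := hξ
      simp [ha_hom _ (inv_pos.2 hτ), this, hτ.ne']
    have hfin : Metric.ediam {ξ | a ξ = 1} ≠ ⊤ := hbdd.ediam_ne_top
    calc _ ≤ _ := hscale τ hτ _ subset_rfl
      _ ≤ K * (ENNReal.ofReal τ * Metric.ediam {ξ | a ξ = 1}) ^ m := by
        gcongr
        refine (Metric.ediam_mono hsub).trans ?_
        rw [ediam_smul₀, ENNReal.smul_def, smul_eq_mul, ← enorm_eq_nnnorm,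
          Real.enorm_eq_ofReal hτ.le]
      _ = (K * (Metric.ediam {ξ | a ξ = 1}).toNNReal ^ m : NNReal) * ENNReal.ofReal τ ^ m := by
        push_cast
        rw [ENNReal.coe_toNNReal hfin]
        ring
      _ ≤ _ := by gcongr; exact le_add_self

end LevelSet

lemma lintegral_rpow_mul_exp_neg_mul {s r : ℝ} (hs : 0 < s) (hr : 0 < r) :
    ∫⁻ t in Set.Ioi (0 : ℝ), ENNReal.ofReal (t ^ (s - 1) * rexp (-(r * t))) =
      ENNReal.ofReal ((1 / r) ^ s * Real.Gamma s) := by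
  have h_int : IntegrableOn (fun t : ℝ => t ^ (s - 1) * rexp (-(r * t))) (Set.Ioi 0) := by
    refine Integrable.of_integral_ne_zero ?_
    rw [Real.integral_rpow_mul_exp_neg_mul_Ioi hs hr]
    have := Real.Gamma_pos_of_pos hs
    positivity
  rw [← Real.integral_rpow_mul_exp_neg_mul_Ioi hs hr,
    ofReal_integral_eq_lintegral_ofReal h_int]
  filter_upwards [ae_restrict_mem measurableSet_Ioi] with t ht
  have : 0 < t := ht
  positivity

lemma ofReal_exp_neg_eq_lintegral (u : ℝ) :
    ENNReal.ofReal (rexp (-u)) = ∫⁻ v in Set.Ioi u, ENNReal.ofReal (rexp (-v)) := by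
  rw [← integral_exp_neg_Ioi u, ofReal_integral_eq_lintegral_ofReal]
  · exact integrableOn_exp_neg_Ioi u
  · exact ae_of_all _ fun v => (Real.exp_pos _).le

lemma lintegral_gaussian_le_of_measure_closedBall_le {V : Type*} [NormedAddCommGroup V]
    [MeasurableSpace V] [BorelSpace V] [SecondCountableTopology V]
    {σ : Measure V} [SFinite σ] {K : NNReal} {m : ℕ}
    (hσ : ∀ ξ r, 0 ≤ r → σ (Metric.closedBall ξ r) ≤ K * ENNReal.ofReal r ^ m)
    {t : ℝ} (ht : 0 < t) (ξ : V) :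
    ∫⁻ ζ, ENNReal.ofReal (rexp (-(‖ξ - ζ‖ ^ 2 / (4 * t)))) ∂σ ≤
      K * ENNReal.ofReal (2 ^ m * Real.Gamma (m / 2 + 1)) * ENNReal.ofReal (√t) ^ m := by
  let k : V → ℝ → ENNReal := fun ζ v =>
    Set.indicator {p : V × ℝ | ‖ξ - p.1‖ ^ 2 / (4 * t) ≤ p.2}
      (fun p => ENNReal.ofReal (rexp (-p.2))) (ζ, v)
  have hmeas : MeasurableSet {p : V × ℝ | ‖ξ - p.1‖ ^ 2 / (4 * t) ≤ p.2} :=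
    measurableSet_le (by fun_prop) (by fun_prop)
  have hk : Measurable (Function.uncurry k) :=
    Measurable.indicator (by fun_prop) hmeas
  have hk_of_le : ∀ {ζ v}, ‖ξ - ζ‖ ^ 2 / (4 * t) ≤ v → k ζ v = ENNReal.ofReal (rexp (-v)) :=
    fun {ζ v} h => Set.indicator_of_mem
      (s := {p : V × ℝ | ‖ξ - p.1‖ ^ 2 / (4 * t) ≤ p.2}) (a := (ζ, v)) h _
  have hk_of_not_le : ∀ {ζ v}, ¬ ‖ξ - ζ‖ ^ 2 / (4 * t) ≤ v → k ζ v = 0 :=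
    fun {ζ v} h => Set.indicator_of_notMem
      (s := {p : V × ℝ | ‖ξ - p.1‖ ^ 2 / (4 * t) ≤ p.2}) (a := (ζ, v)) h _
  calc ∫⁻ ζ, ENNReal.ofReal (rexp (-(‖ξ - ζ‖ ^ 2 / (4 * t)))) ∂σ
      ≤ ∫⁻ ζ, (∫⁻ v in Set.Ioi (0 : ℝ), k ζ v) ∂σ := by
        gcongr with ζ
        rw [ofReal_exp_neg_eq_lintegral, ← lintegral_indicator measurableSet_Ioi,
          ← lintegral_indicator measurableSet_Ioi]
        gcongr with v
        have h0 : 0 ≤ ‖ξ - ζ‖ ^ 2 / (4 * t) := by positivity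
        by_cases hv : ‖ξ - ζ‖ ^ 2 / (4 * t) < v
        · rw [Set.indicator_of_mem (show v ∈ Set.Ioi _ from hv),
            Set.indicator_of_mem (show v ∈ Set.Ioi 0 from h0.trans_lt hv),
            hk_of_le hv.le]
        · rw [Set.indicator_of_notMem (show v ∉ Set.Ioi _ from hv)]
          exact zero_le
    _ = ∫⁻ v in Set.Ioi (0 : ℝ), ∫⁻ ζ, k ζ v ∂σ :=
        lintegral_lintegral_swap hk.aemeasurable
    _ ≤ ∫⁻ v in Set.Ioi (0 : ℝ), K * ENNReal.ofReal (√t) ^ m * ENNReal.ofReal (2 ^ m) *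
          ENNReal.ofReal (v ^ ((m / 2 + 1 : ℝ) - 1) * rexp (-(1 * v))) := by
        refine setLIntegral_mono' measurableSet_Ioi fun v hv => ?_
        have hv : 0 < v := hv
        calc ∫⁻ ζ, k ζ v ∂σ
            ≤ ∫⁻ ζ, (Metric.closedBall ξ (2 * √t * √v)).indicator
                (fun _ => ENNReal.ofReal (rexp (-v))) ζ ∂σ := by
              gcongr with ζ
              by_cases h : ‖ξ - ζ‖ ^ 2 / (4 * t) ≤ v
              · rw [Set.indicator_of_mem]
                · rw [hk_of_le h]
                · rw [Metric.mem_closedBall, dist_comm, dist_eq_norm]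
                  refine abs_le_of_sq_le_sq' ?_ (by positivity) |>.2
                  rw [mul_pow, mul_pow, Real.sq_sqrt ht.le, Real.sq_sqrt hv.le]
                  rw [div_le_iff₀ (by positivity)] at h
                  linarith
              · rw [hk_of_not_le h]
                exact zero_le
          _ = ENNReal.ofReal (rexp (-v)) * σ (Metric.closedBall ξ (2 * √t * √v)) := by
              rw [lintegral_indicator_const measurableSet_closedBall]
          _ ≤ ENNReal.ofReal (rexp (-v)) * (K * ENNReal.ofReal (2 * √t * √v) ^ m) := by
              gcongr
              exact hσ _ _ (by positivity)
          _ = _ := by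
              have : v ^ ((m / 2 + 1 : ℝ) - 1) = √v ^ m := by
                rw [Real.sqrt_eq_rpow, ← Real.rpow_natCast, ← Real.rpow_mul hv.le]
                congr 1
                ring
              rw [this, one_mul, ENNReal.ofReal_mul (by positivity),
                ENNReal.ofReal_mul (by positivity), ENNReal.ofReal_mul (by positivity),
                ENNReal.ofReal_pow (by positivity), ENNReal.ofReal_pow (by positivity)]
              ring
    _ = _ := by
        rw [lintegral_const_mul' _ _ (by finiteness),
          lintegral_rpow_mul_exp_neg_mul (by positivity) one_pos,
          ENNReal.ofReal_mul (p := 2 ^ m) (by positivity)]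
        simp only [div_one, Real.one_rpow, one_mul]
        ring

lemma lintegral_rpow_mul_min_le {θ τ : ℝ} {m : ℕ} (hθ : 0 < θ) (hθ' : θ < (m : ℝ) / 2)
    (hτ : 0 < τ) :
    ∫⁻ t in Set.Ioi (0 : ℝ), ENNReal.ofReal (t ^ (θ - 1 - m / 2) * min τ (√t) ^ m) ≤
      ENNReal.ofReal ((1 / θ + 1 / (m / 2 - θ)) * τ ^ (2 * θ)) := by
  have hτ2 : 0 < τ ^ 2 := by positivity
  have hd : 0 < (m : ℝ) / 2 - θ := by linarith
  have hpow : ∀ p : ℝ, (τ ^ 2) ^ p = τ ^ (2 * p) := fun p => by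
    rw [Real.rpow_mul hτ.le, Real.rpow_two]
  rw [← Set.Ioc_union_Ioi_eq_Ioi hτ2.le, add_mul, ENNReal.ofReal_add (by positivity) (by positivity)]
  refine (lintegral_union_le _ _ _).trans ?_
  gcongr
  · have h_int : IntegrableOn (fun t : ℝ => t ^ (θ - 1)) (Set.Ioc 0 (τ ^ 2)) :=
      (intervalIntegrable_iff_integrableOn_Ioc_of_le hτ2.le).1
        (intervalIntegral.intervalIntegrable_rpow' (by linarith))
    calc _ ≤ ∫⁻ t in Set.Ioc 0 (τ ^ 2), ENNReal.ofReal (t ^ (θ - 1)) := by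
          refine setLIntegral_mono' measurableSet_Ioc fun t ht => ?_
          have ht0 : 0 < t := ht.1
          gcongr
          calc t ^ (θ - 1 - m / 2) * min τ (√t) ^ m ≤ t ^ (θ - 1 - m / 2) * √t ^ m := by
                gcongr
                exact min_le_right _ _
            _ = t ^ (θ - 1) := by
                rw [Real.sqrt_eq_rpow, ← Real.rpow_natCast, ← Real.rpow_mul ht0.le,
                  ← Real.rpow_add ht0]
                congr 1
                ring
      _ = ENNReal.ofReal (∫ t in Set.Ioc 0 (τ ^ 2), t ^ (θ - 1)) := by
          rw [ofReal_integral_eq_lintegral_ofReal h_int]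
          filter_upwards [ae_restrict_mem measurableSet_Ioc] with t ht
          have := ht.1
          positivity
      _ = _ := by
          rw [← intervalIntegral.integral_of_le hτ2.le, integral_rpow (Or.inl (by linarith)),
            sub_add_cancel, Real.zero_rpow hθ.ne', hpow]
          congr 1
          ring
  · have h_int : IntegrableOn (fun t : ℝ => τ ^ m * t ^ (θ - 1 - m / 2)) (Set.Ioi (τ ^ 2)) :=
      (integrableOn_Ioi_rpow_of_lt (by linarith) hτ2).const_mul _
    calc _ ≤ ∫⁻ t in Set.Ioi (τ ^ 2), ENNReal.ofReal (τ ^ m * t ^ (θ - 1 - m / 2)) := by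
          refine setLIntegral_mono' measurableSet_Ioi fun t ht => ?_
          have ht0 : 0 < t := hτ2.trans ht
          rw [mul_comm]
          gcongr
          exact min_le_left _ _
      _ = ENNReal.ofReal (∫ t in Set.Ioi (τ ^ 2), τ ^ m * t ^ (θ - 1 - m / 2)) := by
          rw [ofReal_integral_eq_lintegral_ofReal h_int]
          filter_upwards [ae_restrict_mem measurableSet_Ioi] with t ht
          have : 0 < t := hτ2.trans ht
          positivity
      _ = _ := by
          rw [integral_const_mul, integral_Ioi_rpow_of_lt (by linarith) hτ2, hpow,
            ← Real.rpow_natCast, show θ - 1 - (m : ℝ) / 2 + 1 = -(m / 2 - θ) by ring, neg_div_neg_eq,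
            mul_div_assoc', ← Real.rpow_add hτ]
          congr 1
          rw [div_mul_eq_mul_div, one_mul]
          congr 2
          ring

lemma ennreal_two_mul_le_add_sq (x y : ENNReal) : 2 * x * y ≤ x ^ 2 + y ^ 2 := by
  wlog h : x ≤ y generalizing x y
  · rw [mul_right_comm, add_comm]
    exact this y x (le_of_not_ge h)
  obtain ⟨z, rfl⟩ := exists_add_of_le h
  calc 2 * x * (x + z) ≤ 2 * x * (x + z) + z ^ 2 := le_self_add
    _ = _ := by ring

lemma norm_cexp_I_mul_inner {V : Type*} [NormedAddCommGroup V] [InnerProductSpace ℝ V] (x ξ : V) :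
    ‖cexp (I * ((⟪x, ξ⟫ : ℝ) : ℂ))‖ = 1 := by
  rw [mul_comm, Complex.norm_exp_ofReal_mul_I]

lemma lintegral_prod_kernel_le {V : Type*} [MeasurableSpace V] {σ : Measure V} [SFinite σ]
    {u : V → ENNReal}
    (hu : Measurable u) {k : V → V → ENNReal} (hk : Measurable (Function.uncurry k))
    (hsymm : ∀ ξ ζ, k ξ ζ = k ζ ξ) {M : ENNReal} (hM : ∀ ξ, ∫⁻ ζ, k ξ ζ ∂σ ≤ M) :
    ∫⁻ p : V × V, k p.1 p.2 * (u p.1 * u p.2) ∂(σ.prod σ) ≤ M * ∫⁻ ξ, u ξ ^ 2 ∂σ := by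
  have hk' : Measurable fun p : V × V => k p.1 p.2 := hk
  have hleft : ∫⁻ p : V × V, k p.1 p.2 * u p.1 ^ 2 ∂(σ.prod σ) ≤ M * ∫⁻ ξ, u ξ ^ 2 ∂σ := by
    rw [lintegral_prod _ (by fun_prop), ← lintegral_const_mul _ (by fun_prop)]
    gcongr with ξ
    dsimp only
    rw [lintegral_mul_const _ (show Measurable (k ξ) from hk'.comp measurable_prodMk_left)]
    gcongr
    exact hM ξ
  have hright : ∫⁻ p : V × V, k p.1 p.2 * u p.2 ^ 2 ∂(σ.prod σ) ≤ M * ∫⁻ ξ, u ξ ^ 2 ∂σ := by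
    rw [← lintegral_prod_swap]
    simp only [Prod.fst_swap, Prod.snd_swap]
    simpa only [hsymm] using hleft
  have h2 : 2 * ∫⁻ p : V × V, k p.1 p.2 * (u p.1 * u p.2) ∂(σ.prod σ) ≤
      2 * (M * ∫⁻ ξ, u ξ ^ 2 ∂σ) := by
    calc _ = ∫⁻ p : V × V, 2 * (k p.1 p.2 * (u p.1 * u p.2)) ∂(σ.prod σ) :=
          (lintegral_const_mul _ (by fun_prop)).symm
      _ ≤ ∫⁻ p : V × V, (k p.1 p.2 * u p.1 ^ 2 + k p.1 p.2 * u p.2 ^ 2) ∂(σ.prod σ) := by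
          gcongr with p
          calc _ = k p.1 p.2 * (2 * u p.1 * u p.2) := by ring
            _ ≤ k p.1 p.2 * (u p.1 ^ 2 + u p.2 ^ 2) := by gcongr; exact ennreal_two_mul_le_add_sq _ _
            _ = _ := by ring
      _ ≤ _ := by
          rw [lintegral_add_left (by fun_prop), two_mul]
          exact add_le_add hleft hright
  exact (ENNReal.mul_le_mul_iff_right two_ne_zero ENNReal.ofNat_ne_top).1 h2

section Extension

variable {V : Type*} [NormedAddCommGroup V] [InnerProductSpace ℝ V] [MeasurableSpace V]

/-- The inverse Fourier transform of the measure `φ dσ`, up to normalization. -/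
def fourierExtension (σ : Measure V) (φ : V → ℂ) (x : V) : ℂ :=
  ∫ ξ, cexp (I * ((⟪x, ξ⟫ : ℝ) : ℂ)) * φ ξ ∂σ

lemma norm_fourierExtension_le {σ : Measure V} [IsFiniteMeasure σ] {φ : V → ℂ} {B : ℝ}
    (hB : ∀ ξ, ‖φ ξ‖ ≤ B) (x : V) : ‖fourierExtension σ φ x‖ ≤ B * σ.real Set.univ :=
  norm_integral_le_of_norm_le_const
    (ae_of_all _ fun ξ => by rw [norm_mul, norm_cexp_I_mul_inner, one_mul]; exact hB ξ)

lemma continuous_fourierExtension [BorelSpace V] {σ : Measure V} [IsFiniteMeasure σ] {φ : V → ℂ} {B : ℝ}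
    (hφ : Continuous φ) (hB : ∀ ξ, ‖φ ξ‖ ≤ B) : Continuous (fourierExtension σ φ) := by
  refine continuous_of_dominated (bound := fun _ => B) (fun x => ?_) (fun x => ?_)
    (integrable_const B) (ae_of_all _ fun ξ => by fun_prop)
  · exact Continuous.aestronglyMeasurable (by fun_prop)
  · exact ae_of_all _ fun ξ => by rw [norm_mul, norm_cexp_I_mul_inner, one_mul]; exact hB ξ

variable [FiniteDimensional ℝ V] [BorelSpace V]

lemma integrable_gaussian {t : ℝ} (ht : 0 < t) :
    Integrable (fun x : V => rexp (-t * ‖x‖ ^ 2)) := by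
  refine Integrable.of_integral_ne_zero ?_
  rw [GaussianFourier.integral_rexp_neg_mul_sq_norm ht]
  positivity

lemma integral_gaussian_mul_cexp {t : ℝ} (ht : 0 < t) (ξ ζ : V) :
    ∫ x : V, ((rexp (-t * ‖x‖ ^ 2) : ℝ) : ℂ) * cexp (I * ((⟪x, ξ - ζ⟫ : ℝ) : ℂ)) =
      (((π / t) ^ (Module.finrank ℝ V / 2 : ℝ) * rexp (-(‖ξ - ζ‖ ^ 2 / (4 * t))) : ℝ) : ℂ) := by
  have h := GaussianFourier.integral_cexp_neg_mul_sq_norm_add (b := (t : ℂ))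
    (by simpa using ht) I (ξ - ζ)
  rw [Complex.ofReal_mul, Complex.ofReal_cpow (by positivity)]
  convert h using 2
  · ext x
    rw [Complex.ofReal_exp, ← Complex.exp_add, real_inner_comm]
    push_cast
    rfl
  · push_cast
    rfl
  · push_cast
    rw [I_sq]
    congr 1
    ring

lemma integral_gaussian_mul_normSq_fourierExtension {σ : Measure V} [IsFiniteMeasure σ]
    {φ : V → ℂ} {B : ℝ} (hφ : Continuous φ) (hB : ∀ ξ, ‖φ ξ‖ ≤ B) {t : ℝ} (ht : 0 < t) :
    ((∫ x, rexp (-t * ‖x‖ ^ 2) * ‖fourierExtension σ φ x‖ ^ 2 : ℝ) : ℂ) =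
      ∫ p : V × V, (((π / t) ^ (Module.finrank ℝ V / 2 : ℝ) *
        rexp (-(‖p.1 - p.2‖ ^ 2 / (4 * t))) : ℝ) : ℂ) *
          (φ p.1 * (starRingEnd ℂ) (φ p.2)) ∂(σ.prod σ) := by
  have hB0 : 0 ≤ B := (norm_nonneg _).trans (hB 0)
  let F : V → V × V → ℂ := fun x p => ((rexp (-t * ‖x‖ ^ 2) : ℝ) : ℂ) *
    (cexp (I * ((⟪x, p.1 - p.2⟫ : ℝ) : ℂ)) * (φ p.1 * (starRingEnd ℂ) (φ p.2)))
  have hF : Integrable (Function.uncurry F) (volume.prod (σ.prod σ)) := by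
    refine Integrable.mono' (g := fun q : V × (V × V) => rexp (-t * ‖q.1‖ ^ 2) * (B * B))
      ?_ ?_ (ae_of_all _ ?_)
    · exact (integrable_gaussian ht).mul_prod (integrable_const (B * B))
    · refine Continuous.aestronglyMeasurable ?_
      simp only [F, Function.uncurry_def]
      have := Complex.continuous_conj
      fun_prop
    · rintro ⟨x, p⟩
      simp only [F, Function.uncurry_apply_pair]
      rw [norm_mul, norm_mul, norm_mul, norm_cexp_I_mul_inner, one_mul, Complex.norm_real,
        Real.norm_eq_abs, Real.abs_exp, RCLike.norm_conj]
      gcongr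
      · exact hB _
      · exact hB _
  have hpt : ∀ x, ((rexp (-t * ‖x‖ ^ 2) * ‖fourierExtension σ φ x‖ ^ 2 : ℝ) : ℂ) =
      ∫ p, F x p ∂(σ.prod σ) := by
    intro x
    rw [integral_const_mul, Complex.ofReal_mul, Complex.ofReal_pow, ← Complex.mul_conj']
    congr 1
    rw [fourierExtension, ← integral_conj, ← integral_prod_mul]
    refine integral_congr_ae (ae_of_all _ fun p => ?_)
    simp only [map_mul, ← Complex.exp_conj, Complex.conj_I, Complex.conj_ofReal]
    rw [inner_sub_right, Complex.ofReal_sub, mul_sub, sub_eq_add_neg, Complex.exp_add, neg_mul]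
    ring
  rw [← integral_complex_ofReal]
  simp_rw [hpt]
  rw [integral_integral_swap hF]
  refine integral_congr_ae (ae_of_all _ fun p => ?_)
  simp only [F]
  rw [← integral_gaussian_mul_cexp ht, ← integral_mul_const]
  simp only [mul_assoc]

lemma lintegral_gaussian_mul_fourierExtension_le {σ : Measure V} [IsFiniteMeasure σ]
    {φ : V → ℂ} {B : ℝ} (hφ : Continuous φ) (hB : ∀ ξ, ‖φ ξ‖ ≤ B) {t : ℝ} (ht : 0 < t)
    {M : ENNReal}
    (hM : ∀ ξ, ∫⁻ ζ, ENNReal.ofReal (rexp (-(‖ξ - ζ‖ ^ 2 / (4 * t)))) ∂σ ≤ M) :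
    ∫⁻ x, ENNReal.ofReal (rexp (-t * ‖x‖ ^ 2)) * ‖fourierExtension σ φ x‖ₑ ^ 2 ≤
      ENNReal.ofReal ((π / t) ^ (Module.finrank ℝ V / 2 : ℝ)) * (M * ∫⁻ ξ, ‖φ ξ‖ₑ ^ 2 ∂σ) := by
  have hE := continuous_fourierExtension (σ := σ) hφ hB
  have h_int : Integrable fun x => rexp (-t * ‖x‖ ^ 2) * ‖fourierExtension σ φ x‖ ^ 2 := by
    refine ((integrable_gaussian ht).mul_const ((B * σ.real Set.univ) ^ 2)).mono'
      (Continuous.aestronglyMeasurable (by fun_prop)) (ae_of_all _ fun x => ?_)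
    rw [Real.norm_of_nonneg (by positivity)]
    gcongr
    exact norm_fourierExtension_le hB x
  calc _ = ∫⁻ x, ENNReal.ofReal (rexp (-t * ‖x‖ ^ 2) * ‖fourierExtension σ φ x‖ ^ 2) := by
        refine lintegral_congr fun x => ?_
        rw [ENNReal.ofReal_mul (by positivity), ENNReal.ofReal_pow (norm_nonneg _),
          ofReal_norm]
    _ = ENNReal.ofReal (∫ x, rexp (-t * ‖x‖ ^ 2) * ‖fourierExtension σ φ x‖ ^ 2) :=
        (ofReal_integral_eq_lintegral_ofReal h_int (ae_of_all _ fun x => by positivity)).symm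
    _ = ‖((∫ x, rexp (-t * ‖x‖ ^ 2) * ‖fourierExtension σ φ x‖ ^ 2 : ℝ) : ℂ)‖ₑ := by
        rw [← ofReal_norm, Complex.norm_real,
          Real.norm_of_nonneg (integral_nonneg fun x => by positivity)]
    _ ≤ ∫⁻ p : V × V, ENNReal.ofReal ((π / t) ^ (Module.finrank ℝ V / 2 : ℝ)) *
          (ENNReal.ofReal (rexp (-(‖p.1 - p.2‖ ^ 2 / (4 * t)))) * (‖φ p.1‖ₑ * ‖φ p.2‖ₑ))
            ∂(σ.prod σ) := by
        rw [integral_gaussian_mul_normSq_fourierExtension hφ hB ht]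
        refine (enorm_integral_le_lintegral_enorm _).trans (lintegral_mono fun p => ?_)
        rw [enorm_mul, enorm_mul, ← ofReal_norm, Complex.norm_real,
          Real.norm_of_nonneg (by positivity), ENNReal.ofReal_mul (by positivity), mul_assoc,
          ← ofReal_norm ((starRingEnd ℂ) _), RCLike.norm_conj, ofReal_norm]
    _ ≤ _ := by
        rw [lintegral_const_mul _ (by fun_prop)]
        gcongr
        refine lintegral_prod_kernel_le (u := fun ξ => ‖φ ξ‖ₑ)
          (k := fun ξ ζ => ENNReal.ofReal (rexp (-(‖ξ - ζ‖ ^ 2 / (4 * t)))))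
          (by fun_prop) (by fun_prop) (fun ξ ζ => by rw [norm_sub_rev]) hM

end Extension

lemma lintegral_japanese_mul_fourierExtension_le {V : Type*} [NormedAddCommGroup V]
    [InnerProductSpace ℝ V] [FiniteDimensional ℝ V] [MeasurableSpace V] [BorelSpace V]
    {σ : Measure V} [IsFiniteMeasure σ] {φ : V → ℂ} {B : ℝ} (hφ : Continuous φ)
    (hB : ∀ ξ, ‖φ ξ‖ ≤ B) {m : ℕ} (hV : Module.finrank ℝ V = m + 1) {θ τ : ℝ} (hθ : 0 < θ)
    (hθ' : θ < (m : ℝ) / 2) (hτ : 0 < τ) {K : NNReal}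
    (hK : ∀ t : ℝ, 0 < t → ∀ ξ, ∫⁻ ζ, ENNReal.ofReal (rexp (-(‖ξ - ζ‖ ^ 2 / (4 * t)))) ∂σ ≤
      K * ENNReal.ofReal (min τ (√t) ^ m)) :
    ENNReal.ofReal (Real.Gamma (1 / 2 + θ)) *
        ∫⁻ x, ENNReal.ofReal ((1 / (1 + ‖x‖ ^ 2)) ^ (1 / 2 + θ)) * ‖fourierExtension σ φ x‖ₑ ^ 2 ≤
      ENNReal.ofReal (K * π ^ ((m + 1) / 2 : ℝ) * (1 / θ + 1 / (m / 2 - θ)) * τ ^ (2 * θ)) *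
        ∫⁻ ξ, ‖φ ξ‖ₑ ^ 2 ∂σ := by
  have hE := continuous_fourierExtension (σ := σ) hφ hB
  have hd : 0 < (m : ℝ) / 2 - θ := by linarith
  have hs : 0 < 1 / 2 + θ := by positivity
  calc _ = ∫⁻ x, (∫⁻ t in Set.Ioi (0 : ℝ), ENNReal.ofReal (t ^ ((1 / 2 + θ) - 1) *
          rexp (-((1 + ‖x‖ ^ 2) * t))) * ‖fourierExtension σ φ x‖ₑ ^ 2) := by
        rw [← lintegral_const_mul' _ _ ENNReal.ofReal_ne_top]
        refine lintegral_congr fun x => ?_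
        rw [lintegral_mul_const' _ _ (by finiteness),
          lintegral_rpow_mul_exp_neg_mul hs (by positivity), ENNReal.ofReal_mul (by positivity)]
        ring
    _ = ∫⁻ t in Set.Ioi (0 : ℝ), ∫⁻ x, ENNReal.ofReal (t ^ ((1 / 2 + θ) - 1) *
          rexp (-((1 + ‖x‖ ^ 2) * t))) * ‖fourierExtension σ φ x‖ₑ ^ 2 :=
        lintegral_lintegral_swap (by fun_prop)
    _ ≤ ∫⁻ t in Set.Ioi (0 : ℝ), ENNReal.ofReal (K * π ^ ((m + 1) / 2 : ℝ)) *
          ENNReal.ofReal (t ^ (θ - 1 - m / 2) * min τ (√t) ^ m) * ∫⁻ ξ, ‖φ ξ‖ₑ ^ 2 ∂σ := by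
        refine setLIntegral_mono' measurableSet_Ioi fun t ht => ?_
        have ht : 0 < t := ht
        calc _ ≤ ∫⁻ x, ENNReal.ofReal (t ^ ((1 / 2 + θ) - 1)) *
              (ENNReal.ofReal (rexp (-t * ‖x‖ ^ 2)) * ‖fourierExtension σ φ x‖ₑ ^ 2) := by
              refine lintegral_mono fun x => ?_
              rw [ENNReal.ofReal_mul (by positivity), mul_assoc]
              gcongr
              nlinarith
          _ ≤ ENNReal.ofReal (t ^ ((1 / 2 + θ) - 1)) *
              (ENNReal.ofReal ((π / t) ^ (Module.finrank ℝ V / 2 : ℝ)) *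
                (K * ENNReal.ofReal (min τ (√t) ^ m) * ∫⁻ ξ, ‖φ ξ‖ₑ ^ 2 ∂σ)) := by
              rw [lintegral_const_mul' _ _ ENNReal.ofReal_ne_top]
              gcongr
              exact lintegral_gaussian_mul_fourierExtension_le hφ hB ht (hK t ht)
          _ = _ := by
              have hpow : t ^ (θ - 1 - m / 2) =
                  t ^ ((1 / 2 + θ) - 1) / t ^ ((m + 1) / 2 : ℝ) := by
                rw [← Real.rpow_sub ht]
                congr 1
                ring
              have hmin : 0 ≤ min τ (√t) := by positivity
              rw [hV, hpow, Nat.cast_add_one, Real.div_rpow Real.pi_nonneg ht.le,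
                ← ENNReal.ofReal_coe_nnreal (p := K), ← mul_assoc, ← mul_assoc, ← mul_assoc,
                ← ENNReal.ofReal_mul (by positivity), ← ENNReal.ofReal_mul (by positivity),
                ← ENNReal.ofReal_mul (by positivity), ← ENNReal.ofReal_mul (by positivity)]
              congr 2
              ring
    _ ≤ _ := by
        rw [lintegral_mul_const'' _ (by fun_prop), lintegral_const_mul' _ _ ENNReal.ofReal_ne_top,
          mul_assoc (_ * _), ENNReal.ofReal_mul (p := _ * _) (by positivity)]
        gcongr
        exact lintegral_rpow_mul_min_le hθ hθ' hτ

section FourierTransform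

variable {n : ℕ} (f : SchwartzMap (EuclideanSpace ℝ (Fin n)) ℂ)

lemma norm_cexp_neg_I_mul_inner (x ξ : EuclideanSpace ℝ (Fin n)) :
    ‖cexp (-I * ((⟪x, ξ⟫ : ℝ) : ℂ))‖ = 1 := by
  rw [neg_mul, ← mul_neg, ← Complex.ofReal_neg, mul_comm, Complex.norm_exp_ofReal_mul_I]

lemma continuous_FT : Continuous (FT n fun x => f x) := by
  have h : Continuous fun ξ : EuclideanSpace ℝ (Fin n) =>
      ∫ x : EuclideanSpace ℝ (Fin n), cexp (-I * ((⟪x, ξ⟫ : ℝ) : ℂ)) * f x := by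
    refine continuous_of_dominated (bound := fun x => ‖f x‖) (fun x => ?_) (fun x => ?_)
      f.integrable.norm (ae_of_all _ fun ξ => by fun_prop)
    · exact Continuous.aestronglyMeasurable (by fun_prop)
    · exact ae_of_all _ fun ξ => by rw [norm_mul, norm_cexp_neg_I_mul_inner, one_mul]
  exact h.const_smul ((2 * π) ^ (-(n : ℝ) / 2) : ℝ)

lemma exists_norm_FT_le : ∃ B, ∀ ξ, ‖FT n (fun x => f x) ξ‖ ≤ B := by
  refine ⟨‖(2 * π) ^ (-(n : ℝ) / 2)‖ * ∫ x, ‖f x‖, fun ξ => ?_⟩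
  rw [FT, norm_smul]
  gcongr
  refine (norm_integral_le_integral_norm _).trans_eq ?_
  simp only [norm_mul, norm_cexp_neg_I_mul_inner, one_mul]

lemma lintegral_FT_sq_le {σ : Measure (EuclideanSpace ℝ (Fin n))} [IsFiniteMeasure σ] :
    ∫⁻ ξ, ‖FT n (fun x => f x) ξ‖ₑ ^ 2 ∂σ ≤ ENNReal.ofReal ((2 * π) ^ (-(n : ℝ) / 2)) *
      ∫⁻ x, ‖f x‖ₑ * ‖fourierExtension σ (FT n fun x => f x) x‖ₑ := by
  obtain ⟨B, hB⟩ := exists_norm_FT_le f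
  have hφ := continuous_FT f
  set φ := FT n fun x => f x with hφdef
  have hB0 : 0 ≤ B := (norm_nonneg _).trans (hB 0)
  have h_int : Integrable (fun ξ => ‖φ ξ‖ ^ 2) σ := by
    refine (integrable_const (B ^ 2)).mono' (Continuous.aestronglyMeasurable (by fun_prop))
      (ae_of_all _ fun ξ => ?_)
    rw [Real.norm_of_nonneg (by positivity)]
    gcongr
    exact hB ξ
  let F : EuclideanSpace ℝ (Fin n) → EuclideanSpace ℝ (Fin n) → ℂ := fun ξ x =>
    cexp (-I * ((⟪x, ξ⟫ : ℝ) : ℂ)) * f x * (starRingEnd ℂ) (φ ξ)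
  have hF : Integrable (Function.uncurry F) (σ.prod volume) := by
    refine Integrable.mono'
      (g := fun q : EuclideanSpace ℝ (Fin n) × EuclideanSpace ℝ (Fin n) => B * ‖f q.2‖)
      ((integrable_const B).mul_prod f.integrable.norm) ?_ (ae_of_all _ ?_)
    · refine Continuous.aestronglyMeasurable ?_
      simp only [F, Function.uncurry_def]
      have := Complex.continuous_conj
      fun_prop
    · rintro ⟨ξ, x⟩
      simp only [F, Function.uncurry_apply_pair]
      rw [norm_mul, norm_mul, norm_cexp_neg_I_mul_inner, one_mul, RCLike.norm_conj, mul_comm]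
      gcongr
      exact hB ξ
  have hkey : ((∫ ξ, ‖φ ξ‖ ^ 2 ∂σ : ℝ) : ℂ) = ((2 * π) ^ (-(n : ℝ) / 2) : ℝ) •
      ∫ x, f x * (starRingEnd ℂ) (fourierExtension σ φ x) := by
    have h1 : ∀ ξ, ((‖φ ξ‖ ^ 2 : ℝ) : ℂ) = ((2 * π) ^ (-(n : ℝ) / 2) : ℝ) • ∫ x, F ξ x := by
      intro ξ
      rw [Complex.ofReal_pow, ← Complex.mul_conj', integral_mul_const, ← smul_mul_assoc]
      rfl
    rw [← integral_complex_ofReal]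
    simp_rw [h1]
    rw [integral_smul, integral_integral_swap hF]
    congr 1
    refine integral_congr_ae (ae_of_all _ fun x => ?_)
    dsimp only [F]
    rw [fourierExtension, ← integral_conj, ← integral_const_mul]
    refine integral_congr_ae (ae_of_all _ fun ξ => ?_)
    simp only [map_mul, ← Complex.exp_conj, Complex.conj_I, Complex.conj_ofReal]
    ring
  calc _ = ∫⁻ ξ, ENNReal.ofReal (‖φ ξ‖ ^ 2) ∂σ := by
        refine lintegral_congr fun ξ => ?_
        rw [ENNReal.ofReal_pow (norm_nonneg _), ofReal_norm]
    _ = ENNReal.ofReal (∫ ξ, ‖φ ξ‖ ^ 2 ∂σ) :=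
        (ofReal_integral_eq_lintegral_ofReal h_int (ae_of_all _ fun x => by positivity)).symm
    _ = ‖((∫ ξ, ‖φ ξ‖ ^ 2 ∂σ : ℝ) : ℂ)‖ₑ := by
        rw [← ofReal_norm, Complex.norm_real,
          Real.norm_of_nonneg (integral_nonneg fun x => by positivity)]
    _ ≤ _ := by
        rw [hkey, enorm_smul, Real.enorm_eq_ofReal (by positivity)]
        gcongr
        refine (enorm_integral_le_lintegral_enorm _).trans_eq (lintegral_congr fun x => ?_)
        rw [enorm_mul, ← ofReal_norm ((starRingEnd ℂ) _), RCLike.norm_conj, ofReal_norm]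

end FourierTransform

lemma eLpNorm_two_sq {α : Type*} [MeasurableSpace α] (μ : Measure α) (g : α → ℂ) :
    eLpNorm g 2 μ ^ 2 = ∫⁻ x, ‖g x‖ₑ ^ 2 ∂μ := by
  simpa using eLpNorm_nnreal_pow_eq_lintegral (f := g) (μ := μ) (p := 2) two_ne_zero

lemma sq_lintegral_mul_le {α : Type*} [MeasurableSpace α] (μ : Measure α) {u v : α → ENNReal}
    (hu : AEMeasurable u μ) (hv : AEMeasurable v μ) :
    (∫⁻ x, u x * v x ∂μ) ^ 2 ≤ (∫⁻ x, u x ^ 2 ∂μ) * ∫⁻ x, v x ^ 2 ∂μ := by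
  have h := ENNReal.lintegral_mul_le_Lp_mul_Lq μ Real.HolderConjugate.two_two hu hv
  simp only [Pi.mul_apply, ENNReal.rpow_two] at h
  calc _ ≤ _ := pow_le_pow_left' h 2
    _ = _ := by
      rw [mul_pow, ← ENNReal.rpow_two, ← ENNReal.rpow_two, ← ENNReal.rpow_mul,
        ← ENNReal.rpow_mul]
      norm_num

lemma eLpNorm_FT_le {m : ℕ} {σ : Measure (EuclideanSpace ℝ (Fin (m + 1)))} [IsFiniteMeasure σ]
    {θ τ : ℝ} (hθ : 0 < θ) (hθ' : θ < (m : ℝ) / 2) (hτ : 0 < τ) {K : NNReal}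
    (hK : ∀ t : ℝ, 0 < t → ∀ ξ, ∫⁻ ζ, ENNReal.ofReal (rexp (-(‖ξ - ζ‖ ^ 2 / (4 * t)))) ∂σ ≤
      K * ENNReal.ofReal (min τ (√t) ^ m))
    (f : SchwartzMap (EuclideanSpace ℝ (Fin (m + 1))) ℂ) :
    eLpNorm (FT (m + 1) fun x => f x) 2 σ ≤
      ENNReal.ofReal ((2 * π) ^ (-((m + 1 : ℕ) : ℝ) / 2) *
        √(K * π ^ ((m + 1) / 2 : ℝ) * (1 / θ + 1 / (m / 2 - θ)) / Real.Gamma (1 / 2 + θ)) * τ ^ θ) *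
        eLpNorm (fun x => ((Real.sqrt (1 + ‖x‖ ^ 2) ^ (1 / 2 + θ) : ℝ) : ℂ) * f x) 2 volume := by
  obtain ⟨B, hB⟩ := exists_norm_FT_le f
  have hφ := continuous_FT f
  have hdual := lintegral_FT_sq_le f (σ := σ)
  set φ := FT (m + 1) fun x => f x with hφdef
  have hE := continuous_fourierExtension (σ := σ) hφ hB
  have hd : 0 < (m : ℝ) / 2 - θ := by linarith
  have hΓ : 0 < Real.Gamma (1 / 2 + θ) := Real.Gamma_pos_of_pos (by positivity)
  set Q : ℝ := K * π ^ ((m + 1) / 2 : ℝ) * (1 / θ + 1 / (m / 2 - θ)) with hQ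
  have hQ0 : 0 ≤ Q := by positivity
  have hext : ∫⁻ x, ENNReal.ofReal ((1 / (1 + ‖x‖ ^ 2)) ^ (1 / 2 + θ)) *
      ‖fourierExtension σ φ x‖ₑ ^ 2 ≤
        ENNReal.ofReal (Q / Real.Gamma (1 / 2 + θ) * τ ^ (2 * θ)) * ∫⁻ ξ, ‖φ ξ‖ₑ ^ 2 ∂σ := by
    have h := lintegral_japanese_mul_fourierExtension_le hφ hB (by simp) hθ hθ' hτ hK
    rw [← ENNReal.mul_le_mul_iff_right (ENNReal.ofReal_pos.2 hΓ).ne' ENNReal.ofReal_ne_top,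
      ← mul_assoc, ← ENNReal.ofReal_mul hΓ.le]
    convert h using 3
    rw [← hQ]
    field_simp
  set w : EuclideanSpace ℝ (Fin (m + 1)) → ℝ := fun x => √(1 + ‖x‖ ^ 2) ^ (1 / 2 + θ) with hw
  have hwpos : ∀ x, 0 < w x := fun x => by positivity
  have hwcont : Continuous w :=
    Continuous.rpow_const (by fun_prop) fun x => Or.inl (by positivity)
  have hwsq : ∀ x, (1 / (1 + ‖x‖ ^ 2)) ^ (1 / 2 + θ) = ((w x)⁻¹) ^ 2 := fun x => by
    have h0 : 0 ≤ 1 + ‖x‖ ^ 2 := by positivity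
    rw [hw, inv_pow, Real.rpow_pow_comm (Real.sqrt_nonneg _), Real.sq_sqrt h0, one_div,
      Real.inv_rpow h0]
  set N := eLpNorm (fun x => ((w x : ℝ) : ℂ) * f x) 2 volume with hN
  set A := eLpNorm φ 2 σ with hA
  have hAsq : A ^ 2 = ∫⁻ ξ, ‖φ ξ‖ₑ ^ 2 ∂σ := eLpNorm_two_sq σ φ
  have hAtop : A ≠ ⊤ :=
    (MemLp.of_bound hφ.aestronglyMeasurable B (ae_of_all _ hB)).eLpNorm_lt_top.ne
  rw [← hAsq] at hext hdual
  set c : ℝ := (2 * π) ^ (-((m + 1 : ℕ) : ℝ) / 2) with hc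
  have hc0 : 0 ≤ c := by positivity
  have hCS : (∫⁻ x, ‖f x‖ₑ * ‖fourierExtension σ φ x‖ₑ) ^ 2 ≤
      N ^ 2 * (ENNReal.ofReal (Q / Real.Gamma (1 / 2 + θ) * τ ^ (2 * θ)) * A ^ 2) := by
    have h := sq_lintegral_mul_le volume (u := fun x => ‖((w x : ℝ) : ℂ) * f x‖ₑ)
      (v := fun x => ENNReal.ofReal (w x)⁻¹ * ‖fourierExtension σ φ x‖ₑ)
      (Continuous.aemeasurable (by fun_prop))
      ((hwcont.measurable.inv.ennreal_ofReal.mul hE.enorm.measurable).aemeasurable)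
    rw [← eLpNorm_two_sq, ← hN] at h
    calc _ = _ := by
          congr 1
          refine lintegral_congr fun x => ?_
          rw [enorm_mul, ← ofReal_norm ((w x : ℝ) : ℂ), Complex.norm_real,
            Real.norm_of_nonneg (hwpos x).le,
            show ∀ p q r s : ENNReal, p * q * (r * s) = p * r * (q * s) by intros; ring,
            ← ENNReal.ofReal_mul (hwpos x).le, mul_inv_cancel₀ (hwpos x).ne',
            ENNReal.ofReal_one, one_mul]
      _ ≤ _ := h
      _ ≤ _ := by
          gcongr
          refine le_trans (le_of_eq (lintegral_congr fun x => ?_)) hext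
          rw [mul_pow, hwsq, ENNReal.ofReal_pow (inv_nonneg.2 (hwpos x).le)]
  rcases eq_or_ne A 0 with h0 | h0
  · rw [h0]
    exact zero_le
  have hfourth : A ^ 2 * A ^ 2 ≤ A ^ 2 * (ENNReal.ofReal
      (c * √(Q / Real.Gamma (1 / 2 + θ)) * τ ^ θ) * N) ^ 2 := by
    have hconst : ENNReal.ofReal (c * √(Q / Real.Gamma (1 / 2 + θ)) * τ ^ θ) ^ 2 =
        ENNReal.ofReal c ^ 2 * ENNReal.ofReal (Q / Real.Gamma (1 / 2 + θ) * τ ^ (2 * θ)) := by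
      rw [← ENNReal.ofReal_pow (by positivity), ← ENNReal.ofReal_pow hc0,
        ← ENNReal.ofReal_mul (by positivity), mul_pow, mul_pow, Real.sq_sqrt (by positivity),
        mul_assoc, mul_comm 2 θ, Real.rpow_mul hτ.le, Real.rpow_two]
    calc A ^ 2 * A ^ 2 = (A ^ 2) ^ 2 := by ring
      _ ≤ _ := pow_le_pow_left' hdual 2
      _ ≤ ENNReal.ofReal c ^ 2 * (N ^ 2 *
          (ENNReal.ofReal (Q / Real.Gamma (1 / 2 + θ) * τ ^ (2 * θ)) * A ^ 2)) := by
        rw [mul_pow]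
        exact mul_le_mul_right hCS _
      _ = _ := by
        rw [mul_pow, hconst]
        ring
  rw [ENNReal.mul_le_mul_iff_right (pow_ne_zero 2 h0) (ENNReal.pow_ne_top hAtop)] at hfourth
  exact (ENNReal.pow_le_pow_left_iff two_ne_zero).1 hfourth

theorem low_frequency_trace_estimate (n : ℕ) (hn : 2 ≤ n) (θ : ℝ) (hθ : 0 < θ)
    (hθ' : θ < ((n : ℝ) - 1) / 2)
    (a : EuclideanSpace ℝ (Fin n) → ℝ)
    (ha_cont : Continuous a)
    (ha_smooth : ContDiffOn ℝ (⊤ : ℕ∞) a {(0 : EuclideanSpace ℝ (Fin n))}ᶜ)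
    (ha_hom : ∀ t : ℝ, 0 < t → ∀ ξ, a (t • ξ) = t * a ξ)
    (ha_pos : ∀ ξ : EuclideanSpace ℝ (Fin n), ξ ≠ 0 → 0 < a ξ) :
    ∃ C > 0, ∀ τ : ℝ, 0 < τ → ∀ f : SchwartzMap (EuclideanSpace ℝ (Fin n)) ℂ,
      eLpNorm (FT n (fun x => f x)) 2 (μH[(n : ℝ) - 1].restrict {ξ | a ξ = τ})
        ≤ ENNReal.ofReal (C * τ ^ θ) *
            eLpNorm (fun x => ((Real.sqrt (1 + ‖x‖ ^ 2) ^ (1 / 2 + θ) : ℝ) : ℂ) * f x) 2 volume := by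
  obtain ⟨m, rfl⟩ : ∃ m, n = m + 1 := ⟨n - 1, by omega⟩
  have hm : ((m + 1 : ℕ) : ℝ) - 1 = m := by push_cast; ring
  rw [hm] at hθ' ⊢
  obtain ⟨K, hK⟩ := levelSet_measure_le ha_cont ha_smooth ha_hom ha_pos
  let G : NNReal := (2 ^ m * Real.Gamma (m / 2 + 1)).toNNReal
  let K' : NNReal := K * (1 + G)
  let C : ℝ := (2 * π) ^ (-((m + 1 : ℕ) : ℝ) / 2) *
    √(K' * π ^ ((m + 1) / 2 : ℝ) * (1 / θ + 1 / (m / 2 - θ)) / Real.Gamma (1 / 2 + θ))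
  have hC : 0 ≤ C := by positivity
  refine ⟨C + 1, by positivity, fun τ hτ f => ?_⟩
  obtain ⟨hball, huniv⟩ := hK τ hτ
  have : IsFiniteMeasure (μH[(m : ℝ)].restrict {ξ | a ξ = τ}) :=
    ⟨huniv.trans_lt (by finiteness)⟩
  have hgauss : ∀ t : ℝ, 0 < t → ∀ ξ, ∫⁻ ζ, ENNReal.ofReal (rexp (-(‖ξ - ζ‖ ^ 2 / (4 * t))))
      ∂(μH[(m : ℝ)].restrict {ξ | a ξ = τ}) ≤ K' * ENNReal.ofReal (min τ (√t) ^ m) := by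
    intro t ht ξ
    rcases le_total τ (√t) with h | h
    · rw [min_eq_left h, ENNReal.ofReal_pow hτ.le]
      calc _ ≤ ∫⁻ _, 1 ∂(μH[(m : ℝ)].restrict {ξ | a ξ = τ}) := by
            gcongr with ζ
            rw [ENNReal.ofReal_le_one, Real.exp_le_one_iff, neg_nonpos]
            positivity
        _ ≤ K * ENNReal.ofReal τ ^ m := by rw [lintegral_one]; exact huniv
        _ ≤ _ := by
            gcongr
            exact le_mul_of_one_le_right' le_self_add
    · rw [min_eq_right h, ENNReal.ofReal_pow (Real.sqrt_nonneg t)]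
      refine (lintegral_gaussian_le_of_measure_closedBall_le hball ht ξ).trans ?_
      gcongr
      simp only [K', ENNReal.coe_mul, ENNReal.coe_add]
      gcongr
      exact le_add_self
  refine (eLpNorm_FT_le hθ hθ' hτ hgauss f).trans ?_
  gcongr
  exact (lt_add_one C).le
end
end
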